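/- For every k ∈ ℕ, the critical function q_c of anisotropic bond percolation on the slab S^k satisfies q_c(p_k) = 1 and lim_{p ↓ p_k} q_c(p) = 1. -/

import Mathlib

/-! Every bond of `ℤ²` has exactly one endpoint of odd parity, so the slab splits into independent
stars: the star of an odd site consists of the four columns of horizontal bonds around it and of the
vertical bonds above it. A column of `k + 1` horizontal bonds contains an open bond with probability
`1 - (1 - p) ^ (k + 1)`, which equals `1 / 2` at `p = p_k`. Even when all vertical bonds are open,
the slab at `p_k` is therefore dominated by critical bond percolation on `ℤ²`, which has no infinite
cluster: Russo–Seymour–Welsh estimates surround the origin by a dual circuit in each of infinitely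
many disjoint annuli, with probability bounded away from zero.

For `p` slightly above `p_k` the columns are open slightly too often. If `q < 1`, however, with
positive probability all vertical bonds of a star are closed while its open columns sit at two
different heights, one column being cut off from the others. Such a star behaves as if that column
were closed, and the mass of these configurations pays for the small excess. A coupling star by star
then yields domination by critical planar percolation again, so that `θ(p, q) = 0`.
-/

open MeasureTheory Set
open scoped ENNReal

namespace AnisoSlab

/-! ### A concrete construction of countable products of Bernoulli measures

The product Bernoulli measure on `ι → Bool` (each coordinate `i` open with
probability `P i`, independently) is realized as the pushforward of Lebesgue
measure on `[0,1)`: the binary digits of a uniform sample are i.i.d. fair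
coins; regrouping them along a pairing function yields countably many
independent uniform samples, and comparing the `i`-th sample with `P i`
yields the desired independent Bernoulli coordinates. -/

/-- The `n`-th binary digit of `x` (digits after the binary point). -/
noncomputable def binDigit (n : ℕ) (x : ℝ) : Bool :=
  decide (⌊x * 2 ^ (n + 1)⌋ % 2 = 1)

/-- Countably many independent uniform-`[0,1]` samples extracted from a single
uniform sample `x` on `[0,1)`, by regrouping its binary digits. -/
noncomputable def unifSample (i : ℕ) (x : ℝ) : ℝ :=
  ∑' n : ℕ, if binDigit (Nat.pair i n) x then ((2 : ℝ) ^ (n + 1))⁻¹ else 0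

/-- The product Bernoulli measure on `ι → Bool`, coordinate `i` being `true`
with probability `P i`, independently over `i`. -/
noncomputable def bernoulliProduct {ι : Type*} [Encodable ι] (P : ι → ℝ) :
    Measure (ι → Bool) :=
  Measure.map (fun x i => decide (unifSample (Encodable.encode i) x < P i))
    (volume.restrict (Set.Ico (0 : ℝ) 1))

/-! ### The slab `S^k` and anisotropic bond percolation on it -/

/-- Ambient vertices: `ℤ³`; the slab `S^k` uses those with third coordinate in `{0, …, k}`. -/
abbrev Vtx : Type := ℤ × ℤ × ℤ

/-- The three unit coordinate vectors. -/
def dvec : Fin 3 → Vtx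
  | 0 => (1, 0, 0)
  | 1 => (0, 1, 0)
  | 2 => (0, 0, 1)

/-- A bond is indexed by its lower endpoint `v` and a direction `i`; it joins
`v` to `v + dvec i`. Directions `0, 1` give radial (horizontal) bonds, and
direction `2` gives axial (vertical) bonds. -/
abbrev EdgeIdx : Type := Vtx × Fin 3

/-- A percolation configuration: each bond is open (`true`) or closed (`false`). -/
abbrev Config : Type := EdgeIdx → Bool

/-- `v` is a vertex of the slab `S^k`. -/
def InSlab (k : ℕ) (v : Vtx) : Prop := 0 ≤ v.2.2 ∧ v.2.2 ≤ k

/-- `(v, i)` is a bond of the slab `S^k` (both endpoints lie in the slab). -/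
def IsEdge (k : ℕ) (e : EdgeIdx) : Prop := InSlab k e.1 ∧ InSlab k (e.1 + dvec e.2)

/-- The measure `P_{p,q}` on configurations of `S^k`: each radial (horizontal)
bond is open with probability `p` and each axial (vertical) bond is open with
probability `q`, independently. -/
noncomputable def slabMeasure (k : ℕ) (p q : ℝ) : Measure Config :=
  bernoulliProduct (fun e => if e.2 = 2 then q else p)

/-- `x` and `y` are joined by an open bond of `S^k` in the configuration `ω`. -/
def OpenAdj (k : ℕ) (ω : Config) (x y : Vtx) : Prop :=
  ∃ i : Fin 3,
    (y = x + dvec i ∧ IsEdge k (x, i) ∧ ω (x, i) = true) ∨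
    (x = y + dvec i ∧ IsEdge k (y, i) ∧ ω (y, i) = true)

/-- The open cluster of the vertex `x` in the configuration `ω`. -/
def cluster (k : ℕ) (ω : Config) (x : Vtx) : Set Vtx :=
  {y | Relation.ReflTransGen (OpenAdj k ω) x y}

/-- The percolation function `θ(p,q) = P_{p,q}(0 ↔ ∞)`. -/
noncomputable def theta (k : ℕ) (p q : ℝ) : ℝ≥0∞ :=
  slabMeasure k p q {ω | (cluster k ω 0).Infinite}

/-- `p_k = 1 - (1/2)^{1/(k+1)}`, the horizontal critical value at `q = 1`. -/
noncomputable def pCrit (k : ℕ) : ℝ := 1 - (1 / 2 : ℝ) ^ ((1 : ℝ) / (k + 1))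

/-- The critical curve `q_c(p) = sup {q ∈ [0,1] : θ(p,q) = 0}`. -/
noncomputable def qc (k : ℕ) (p : ℝ) : ℝ :=
  sSup {q : ℝ | q ∈ Set.Icc (0 : ℝ) 1 ∧ theta k p q = 0}

/-- The critical curve `p_c(q) = sup {p ∈ [0,1] : θ(p,q) = 0}`. -/
noncomputable def pc (k : ℕ) (q : ℝ) : ℝ :=
  sSup {p : ℝ | p ∈ Set.Icc (0 : ℝ) 1 ∧ theta k p q = 0}

/-! ### Connectivity inside a set of vertices -/

section Connectivity

variable {V W : Type*} {G : SimpleGraph V} {H : SimpleGraph W} {S T : Set V} {a b c : V}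

/-- `a` and `b` are joined by a path of `G` all of whose vertices lie in `S`. -/
def ConnIn (G : SimpleGraph V) (S : Set V) (a b : V) : Prop :=
  a ∈ S ∧ Relation.ReflTransGen (fun x y => G.Adj x y ∧ y ∈ S) a b

namespace ConnIn

theorem refl (h : a ∈ S) : ConnIn G S a a := ⟨h, .refl⟩

theorem left_mem (h : ConnIn G S a b) : a ∈ S := h.1

theorem right_mem (h : ConnIn G S a b) : b ∈ S := by
  obtain ⟨ha, h⟩ := h
  cases h with
  | refl => exact ha
  | tail _ h => exact h.2

theorem trans (h : ConnIn G S a b) (h' : ConnIn G S b c) : ConnIn G S a c :=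
  ⟨h.1, h.2.trans h'.2⟩

theorem tail (h : ConnIn G S a b) (h' : G.Adj b c) (hc : c ∈ S) : ConnIn G S a c :=
  ⟨h.1, h.2.tail ⟨h', hc⟩⟩

@[elab_as_elim]
theorem induction {P : ∀ b, ConnIn G S a b → Prop} (h : ConnIn G S a b)
    (refl : ∀ ha, P a (ConnIn.refl ha))
    (tail : ∀ b c hab hbc hc, P b hab → P c (hab.tail hbc hc)) : P b h := by
  obtain ⟨ha, h⟩ := h
  induction h with
  | refl => exact refl ha
  | tail hab hbc ih => exact tail _ _ ⟨ha, hab⟩ hbc.1 hbc.2 ih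

theorem symm (h : ConnIn G S a b) : ConnIn G S b a := by
  induction h using ConnIn.induction with
  | refl ha => exact refl ha
  | tail b c hab hbc hc ih => exact ((refl hc).tail hbc.symm hab.right_mem).trans ih

theorem map {S' : Set W} (h : ConnIn G S a b) (f : V → W) (hf : MapsTo f S S')
    (hadj : ∀ a ∈ S, ∀ b ∈ S, G.Adj a b → H.Adj (f a) (f b) ∨ f a = f b) :
    ConnIn H S' (f a) (f b) := by
  induction h using ConnIn.induction with
  | refl ha => exact refl (hf ha)
  | tail b c hab hbc hc ih =>
    obtain h | h := hadj b hab.right_mem c hc hbc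
    · exact ih.tail h (hf hc)
    · exact h ▸ ih

theorem mono (h : ConnIn G S a b) (hST : S ⊆ T) : ConnIn G T a b :=
  h.map id hST fun _ _ _ _ => Or.inl

theorem cluster (h : ConnIn G S a b) : ConnIn G {c | ConnIn G S a c} a b := by
  induction h using ConnIn.induction with
  | refl ha => exact refl (refl ha)
  | tail b c hab hbc hc ih => exact ih.tail hbc (hab.tail hbc hc)

theorem exists_exit (h : ConnIn G S a b) (ha : a ∈ T) (hb : b ∉ T) :
    ∃ w w', ConnIn G (S ∩ T) a w ∧ G.Adj w w' ∧ w' ∈ S ∧ w' ∉ T := by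
  by_contra! hno
  suffices ∀ {b}, ConnIn G S a b → ConnIn G (S ∩ T) a b from hb (this h).right_mem.2
  intro b h
  induction h using ConnIn.induction with
  | refl haS => exact refl ⟨haS, ha⟩
  | tail b c _ hbc hc ih => exact ih.tail hbc ⟨hc, hno _ _ ih hbc hc⟩

theorem exists_path (h : ConnIn G S a b) :
    ∃ (n : ℕ) (γ : ℕ → V), γ 0 = a ∧ γ n = b ∧ (∀ i, γ i ∈ S) ∧
      ∀ i < n, G.Adj (γ i) (γ (i + 1)) := by
  induction h using ConnIn.induction with
  | refl ha => exact ⟨0, fun _ => a, rfl, rfl, fun _ => ha, by simp⟩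
  | tail b c _ hbc hc ih =>
    obtain ⟨n, γ, hγ0, hγn, hγS, hγ⟩ := ih
    refine ⟨n + 1, fun i => if i ≤ n then γ i else c, by simp [hγ0], by simp, fun i => ?_,
      fun i hi => ?_⟩
    · dsimp only
      split_ifs
      exacts [hγS i, hc]
    · obtain h | rfl := Nat.lt_succ_iff_lt_or_eq.1 hi
      · simpa [h.le, Nat.succ_le_of_lt h] using hγ i h
      · simpa [hγn] using hbc

end ConnIn

end Connectivity

/-! ### Planar topology of the square lattice -/

/-- The square lattice: nearest-neighbour adjacency on `ℤ²`, written `𝕃²` as in percolation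
theory. -/
noncomputable def squareLattice : SimpleGraph (ℤ × ℤ) := SimpleGraph.hasse (ℤ × ℤ)

local notation "𝕃²" => squareLattice

theorem squareLattice_adj {a b : ℤ × ℤ} : (𝕃²).Adj a b ↔
    b.1 = a.1 ∧ (b.2 = a.2 + 1 ∨ a.2 = b.2 + 1) ∨
      b.2 = a.2 ∧ (b.1 = a.1 + 1 ∨ a.1 = b.1 + 1) := by
  simp only [squareLattice, SimpleGraph.hasse_prod, SimpleGraph.boxProd_adj,
    SimpleGraph.hasse_adj, Order.covBy_iff_add_one_eq]
  omega

theorem sum_boundary_grid {M : Type*} [AddCommMonoid M] {h v : ℕ → ℕ → M} {m n : ℕ}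
    (H : ∀ i < m, ∀ j < n, h i j + v (i + 1) j = v i j + h i (j + 1)) :
    ∑ i ∈ Finset.range m, h i 0 + ∑ j ∈ Finset.range n, v m j =
      ∑ j ∈ Finset.range n, v 0 j + ∑ i ∈ Finset.range m, h i n := by
  have row (j) (hj : j < n) : ∀ m' ≤ m, ∑ i ∈ Finset.range m', h i j + v m' j =
      v 0 j + ∑ i ∈ Finset.range m', h i (j + 1) := by
    intro m' hm'
    induction m' with
    | zero => simp
    | succ m' ih =>
      rw [Finset.sum_range_succ, Finset.sum_range_succ, add_assoc, H m' hm' j hj, ← add_assoc,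
        ih (by omega), add_assoc]
  suffices ∀ n' ≤ n, ∑ i ∈ Finset.range m, h i 0 + ∑ j ∈ Finset.range n', v m j =
      ∑ j ∈ Finset.range n', v 0 j + ∑ i ∈ Finset.range m, h i n' from this n le_rfl
  intro n' hn'
  induction n' with
  | zero => simp
  | succ n' ih =>
    rw [Finset.sum_range_succ, Finset.sum_range_succ, ← add_assoc, ih (by omega), add_assoc,
      row n' hn' m le_rfl, add_assoc]

/-- The number mod 2 of crossings of the ray `{x = 1/2, y > 0}` by the lattice step from `d`
to `e`. -/
def rayCrossing (d e : ℤ × ℤ) : ZMod 2 :=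
  (if 0 < d.2 then 1 else 0) * ((if 0 < e.1 then 1 else 0) - if 0 < d.1 then 1 else 0)

theorem rayCrossing_square {a a' b b' : ℤ × ℤ} (ha : (𝕃²).Adj a a') (hb : (𝕃²).Adj b b')
    (h₁ : a ≠ b) (h₂ : a' ≠ b) (h₃ : a ≠ b') (h₄ : a' ≠ b') :
    rayCrossing (a - b) (a' - b) + rayCrossing (a' - b) (a' - b') =
      rayCrossing (a - b) (a - b') + rayCrossing (a - b') (a' - b') := by
  rw [squareLattice_adj] at ha hb
  simp only [ne_eq, Prod.ext_iff] at h₁ h₂ h₃ h₄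
  simp only [rayCrossing, Prod.fst_sub, Prod.snd_sub]
  obtain ⟨ha, ha'⟩ | ⟨ha, ha'⟩ := ha <;> obtain ⟨hb, hb'⟩ | ⟨hb, hb'⟩ := hb <;>
    simp only [ha, hb, sub_self, mul_zero, add_zero, zero_add]
  · have : (0 < a'.2 - b.2 ↔ 0 < a.2 - b.2) ∨ (0 < a.1 - b'.1 ↔ 0 < a.1 - b.1) := by omega
    obtain h | h := this <;> simp only [h, sub_self, mul_zero]
  · have : (0 < a.2 - b'.2 ↔ 0 < a.2 - b.2) ∨ (0 < a'.1 - b.1 ↔ 0 < a.1 - b.1) := by omega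
    obtain h | h := this <;> simp only [h, sub_self, mul_zero]
  · ring

theorem rayCrossing_eq_sub_of_snd_nonneg {d e : ℤ × ℤ} (hde : (𝕃²).Adj d e) (hd : 0 ≤ d.2)
    (hd0 : d ≠ 0) (he0 : e ≠ 0) :
    rayCrossing d e = (if 0 < e.1 then 1 else 0) - if 0 < d.1 then 1 else 0 := by
  simp only [squareLattice_adj, ne_eq, Prod.ext_iff, Prod.fst_zero, Prod.snd_zero] at hde hd0 he0
  have : 0 < d.2 ∨ (0 < e.1 ↔ 0 < d.1) := by omega
  obtain h | h := this <;> simp [rayCrossing, h]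

theorem rayCrossing_eq_sub_of_fst_nonneg {d e : ℤ × ℤ} (hde : (𝕃²).Adj d e) (hd : 0 ≤ d.1)
    (he : 0 ≤ e.1) (hd0 : d ≠ 0) (he0 : e ≠ 0) :
    rayCrossing d e =
      (if e.1 = 0 ∧ 0 < e.2 then 1 else 0) - if d.1 = 0 ∧ 0 < d.2 then 1 else 0 := by
  simp only [squareLattice_adj, ne_eq, Prod.ext_iff, Prod.fst_zero, Prod.snd_zero] at hde hd0 he0
  simp only [rayCrossing]
  split_ifs <;> first | rfl | omega

theorem squareLattice_adj_sub_right {a b : ℤ × ℤ} (h : (𝕃²).Adj a b) (c : ℤ × ℤ) :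
    (𝕃²).Adj (a - c) (b - c) := by
  simp only [squareLattice_adj, Prod.fst_sub, Prod.snd_sub] at h ⊢
  omega

theorem squareLattice_adj_sub_left {a b : ℤ × ℤ} (h : (𝕃²).Adj a b) (c : ℤ × ℤ) :
    (𝕃²).Adj (c - a) (c - b) := by
  simp only [squareLattice_adj, Prod.fst_sub, Prod.snd_sub] at h ⊢
  omega

theorem inter_nonempty_of_connIn_crossing {A B : Set (ℤ × ℤ)} {l r t b : ℤ × ℤ}
    (hA : ∀ c ∈ A, b.2 ≤ c.2 ∧ c.2 ≤ t.2) (hB : ∀ c ∈ B, l.1 ≤ c.1 ∧ c.1 ≤ r.1)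
    (hlr : ConnIn 𝕃² A l r) (hbt : ConnIn 𝕃² B b t) : (A ∩ B).Nonempty := by
  by_contra hAB
  obtain ⟨m, γ, hγ0, hγm, hγA, hγ⟩ := hlr.exists_path
  obtain ⟨n, η, hη0, hηn, hηB, hη⟩ := hbt.exists_path
  have hne i j : γ i ≠ η j := fun h => hAB ⟨γ i, hγA i, h ▸ hηB j⟩
  have hne' i j : γ i - η j ≠ 0 := sub_ne_zero.2 (hne i j)
  -- The winding of `γ i - η j` around `0` along the boundary of the parameter rectangle is even;
  -- evaluating it on the four sides gives a contradiction.
  have boundary := sum_boundary_grid (m := m) (n := n)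
    (h := fun i j => rayCrossing (γ i - η j) (γ (i + 1) - η j))
    (v := fun i j => rayCrossing (γ i - η j) (γ i - η (j + 1)))
    fun i hi j hj => rayCrossing_square (hγ i hi) (hη j hj) (hne _ _) (hne _ _) (hne _ _) (hne _ _)
  have top_side : ∑ i ∈ Finset.range m, rayCrossing (γ i - η n) (γ (i + 1) - η n) = 0 :=
    Finset.sum_eq_zero fun i _ => by simp [rayCrossing, hηn, (hA _ (hγA i)).2.not_gt]
  have left_side : ∑ j ∈ Finset.range n, rayCrossing (γ 0 - η j) (γ 0 - η (j + 1)) = 0 :=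
    Finset.sum_eq_zero fun j _ => by
      simp [rayCrossing, hγ0, (hB _ (hηB j)).1.not_gt, (hB _ (hηB (j + 1))).1.not_gt]
  have bottom_side := Finset.sum_range_sub
    (fun i => if 0 < (γ i - η 0).1 then (1 : ZMod 2) else 0) m
  rw [← Finset.sum_congr rfl fun i hi => rayCrossing_eq_sub_of_snd_nonneg
    (squareLattice_adj_sub_right (hγ i (Finset.mem_range.1 hi)) _)
    (by simpa [hη0] using (hA _ (hγA i)).1) (hne' _ _) (hne' _ _)] at bottom_side
  have right_side := Finset.sum_range_sub
    (fun j => if (γ m - η j).1 = 0 ∧ 0 < (γ m - η j).2 then (1 : ZMod 2) else 0) n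
  rw [← Finset.sum_congr rfl fun j hj => rayCrossing_eq_sub_of_fst_nonneg
    (squareLattice_adj_sub_left (hη j (Finset.mem_range.1 hj)) _)
    (by simpa [hγm] using (hB _ (hηB j)).2) (by simpa [hγm] using (hB _ (hηB (j + 1))).2)
    (hne' _ _) (hne' _ _)] at right_side
  rw [bottom_side, right_side, left_side, top_side] at boundary
  have := hB b hbt.left_mem
  have := hB t hbt.right_mem
  have := hA l hlr.left_mem
  have := hA r hlr.right_mem
  have hrb := hne m 0
  have hrt := hne m n
  simp only [hγ0, hγm, hη0, hηn, Prod.fst_sub, Prod.snd_sub, ne_eq, Prod.ext_iff] at *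
  split_ifs at boundary <;> first | omega | exact absurd boundary (by decide)

theorem exists_connIn_of_crossing {A B : Set (ℤ × ℤ)} {l r t b : ℤ × ℤ}
    (hA : ∀ c ∈ A, b.2 ≤ c.2 ∧ c.2 ≤ t.2) (hB : ∀ c ∈ B, l.1 ≤ c.1 ∧ c.1 ≤ r.1)
    (hlr : ConnIn 𝕃² A l r) (hbt : ConnIn 𝕃² B b t) :
    ∃ c, ConnIn 𝕃² A l c ∧ ConnIn 𝕃² B b c :=
  inter_nonempty_of_connIn_crossing (fun _ hc => hA _ (ConnIn.right_mem hc))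
    (fun _ hc => hB _ (ConnIn.right_mem hc)) hlr.cluster hbt.cluster

/-- A labelling of a cell by its colour and by whether it is reached from the side of the
rectangle assigned to that colour. -/
abbrev Label : Type := Bool × Bool

/-- Neighbouring cells of the same colour are both reached or both unreached. -/
def Label.Compatible (s t : Label) : Prop := s.1 = t.1 → s.2 = t.2

/-- The number of interfaces, mod 2, between reached cells of different colours. -/
def Label.interface (s t : Label) : ZMod 2 := if s.1 ≠ t.1 ∧ s.2 ∧ t.2 then 1 else 0

instance : DecidableRel Label.Compatible := fun _ _ => inferInstanceAs (Decidable (_ → _))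

set_option synthInstance.maxSize 512 in
theorem Label.interface_square : ∀ s₀₀ s₁₀ s₁₁ s₀₁ : Label, s₀₀.Compatible s₁₀ →
    s₁₀.Compatible s₁₁ → s₀₁.Compatible s₁₁ → s₀₀.Compatible s₀₁ →
    (s₀₀.1 = s₁₁.1 → s₁₀.1 = s₀₁.1 → s₀₀.1 = s₁₀.1) →
    s₀₀.interface s₁₀ + s₁₀.interface s₁₁ = s₀₀.interface s₀₁ + s₀₁.interface s₁₁ := by
  decide

theorem Label.interface_eq_zero : ∀ (c : Bool) (s t : Label), s ≠ (c, true) → t ≠ (c, true) →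
    s.interface t = 0 := by
  decide

theorem Label.interface_eq_sub : ∀ (c : Bool) (s t : Label), s.Compatible t → s ≠ (c, false) →
    t ≠ (c, false) → s.interface t =
      (if t = (!c, true) then 1 else 0) - if s = (!c, true) then 1 else 0 := by
  decide

/-- A Sperner-type lemma: the interface between the reached cells of the two colours starts at the
corner where their sides meet, so it must end on one of the two other sides. -/
theorem exists_reached_of_labelling (ℓ : ℕ → ℕ → Label) (m n : ℕ)
    (hx : ∀ i < m, ∀ j ≤ n, (ℓ i j).Compatible (ℓ (i + 1) j))
    (hy : ∀ i ≤ m, ∀ j < n, (ℓ i j).Compatible (ℓ i (j + 1)))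
    (hsq : ∀ i < m, ∀ j < n, (ℓ i j).1 = (ℓ (i + 1) (j + 1)).1 →
      (ℓ (i + 1) j).1 = (ℓ i (j + 1)).1 → (ℓ i j).1 = (ℓ (i + 1) j).1)
    (hleft : ∀ j ≤ n, ℓ 0 j ≠ (true, false)) (htop : ∀ i ≤ m, ℓ i n ≠ (false, false)) :
    (∃ j ≤ n, ℓ m j = (true, true)) ∨ ∃ i ≤ m, ℓ i 0 = (false, true) := by
  by_contra! ⟨hright, hbot⟩
  have boundary := sum_boundary_grid (m := m) (n := n)
    (h := fun i j => (ℓ i j).interface (ℓ (i + 1) j))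
    (v := fun i j => (ℓ i j).interface (ℓ i (j + 1)))
    fun i hi j hj => Label.interface_square _ _ _ _ (hx i hi j hj.le) (hy (i + 1) hi j hj)
      (hx i hi (j + 1) hj) (hy i hi.le j hj) (hsq i hi j hj)
  have bottom_side : ∑ i ∈ Finset.range m, (ℓ i 0).interface (ℓ (i + 1) 0) = 0 :=
    Finset.sum_eq_zero fun i hi => by
      rw [Finset.mem_range] at hi
      exact Label.interface_eq_zero false _ _ (hbot i hi.le) (hbot (i + 1) hi)
  have right_side : ∑ j ∈ Finset.range n, (ℓ m j).interface (ℓ m (j + 1)) = 0 :=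
    Finset.sum_eq_zero fun j hj => by
      rw [Finset.mem_range] at hj
      exact Label.interface_eq_zero true _ _ (hright j hj.le) (hright (j + 1) hj)
  rw [bottom_side, right_side,
    Finset.sum_congr rfl fun i hi => Label.interface_eq_sub false _ _
      (hx i (Finset.mem_range.1 hi) n le_rfl) (htop i (Finset.mem_range.1 hi).le)
      (htop (i + 1) (Finset.mem_range.1 hi)),
    Finset.sum_congr rfl fun j hj => Label.interface_eq_sub true _ _
      (hy 0 m.zero_le j (Finset.mem_range.1 hj)) (hleft j (Finset.mem_range.1 hj).le)
      (hleft (j + 1) (Finset.mem_range.1 hj)),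
    Finset.sum_range_sub (fun i => if ℓ i n = (!false, true) then (1 : ZMod 2) else 0),
    Finset.sum_range_sub (fun j => if ℓ 0 j = (!true, true) then (1 : ZMod 2) else 0)] at boundary
  have hcorner : ∀ s : Label, s ≠ (true, false) → s ≠ (false, false) →
      (0 : ZMod 2) + 0 ≠ ((if s = (!true, true) then 1 else 0) - 0) +
        (0 - if s = (!false, true) then 1 else 0) := by
    decide
  refine hcorner (ℓ 0 n) (hleft n le_rfl) (htop 0 m.zero_le) ?_
  simpa [hright n le_rfl, hbot 0 m.zero_le] using boundary

/-- No `2 × 2` block of cells is coloured like a checkerboard: nearest-neighbour connectivity is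
then self-dual. -/
def NoCheckerboard (O : Set (ℤ × ℤ)) : Prop :=
  ∀ x y, ((x, y) ∈ O ↔ (x + 1, y + 1) ∈ O) → ((x + 1, y) ∈ O ↔ (x, y + 1) ∈ O) →
    ((x, y) ∈ O ↔ (x + 1, y) ∈ O)

theorem mem_Icc_prod {x₀ x₁ y₀ y₁ : ℤ} {c : ℤ × ℤ} :
    c ∈ Icc (x₀, y₀) (x₁, y₁) ↔ x₀ ≤ c.1 ∧ c.1 ≤ x₁ ∧ y₀ ≤ c.2 ∧ c.2 ≤ y₁ := by
  simp only [mem_Icc, Prod.le_def]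
  tauto

open Classical in
/-- The label of `c` in a two-colouring of `R` where `O` has colour `true`: `c` is reached if it is
joined to `side b` inside the cells of `R` of its own colour `b`. -/
noncomputable def reachLabel (O R : Set (ℤ × ℤ)) (side : Bool → Set (ℤ × ℤ)) (c : ℤ × ℤ) : Label :=
  (decide (c ∈ O), decide (∃ s ∈ side (decide (c ∈ O)),
    ConnIn 𝕃² {x ∈ R | decide (x ∈ O) = decide (c ∈ O)} s c))

section ReachLabel

variable {O R : Set (ℤ × ℤ)} {side : Bool → Set (ℤ × ℤ)} {c d : ℤ × ℤ} {b : Bool}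

open Classical in
theorem exists_connIn_of_reachLabel_eq (h : reachLabel O R side c = (b, true)) :
    ∃ s ∈ side b, ConnIn 𝕃² {x ∈ R | decide (x ∈ O) = b} s c := by
  obtain ⟨rfl, hr⟩ := Prod.ext_iff.1 h
  exact of_decide_eq_true hr

theorem reachLabel_ne (hc : c ∈ R) (hs : c ∈ side b) : reachLabel O R side c ≠ (b, false) := by
  classical
  intro h
  obtain ⟨rfl, hr⟩ := Prod.ext_iff.1 h
  exact of_decide_eq_false hr ⟨c, hs, .refl ⟨hc, rfl⟩⟩

theorem compatible_reachLabel (hcd : (𝕃²).Adj c d) (hc : c ∈ R) (hd : d ∈ R) :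
    (reachLabel O R side c).Compatible (reachLabel O R side d) := by
  classical
  intro (h : decide (c ∈ O) = decide (d ∈ O))
  refine decide_eq_decide.2 (exists_congr fun s => ?_)
  rw [← h]
  exact and_congr_right fun _ => ⟨fun hs => hs.tail hcd ⟨hd, h.symm⟩,
    fun hs => hs.tail hcd.symm ⟨hc, rfl⟩⟩

end ReachLabel

theorem exists_crossing_or_dual_crossing {O : Set (ℤ × ℤ)} (hO : NoCheckerboard O)
    {x₀ x₁ y₀ y₁ : ℤ} (hx : x₀ ≤ x₁) (hy : y₀ ≤ y₁) :
    (∃ l r, ConnIn 𝕃² (O ∩ Icc (x₀, y₀) (x₁, y₁)) l r ∧ l.1 = x₀ ∧ r.1 = x₁) ∨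
      ∃ b t, ConnIn 𝕃² (Oᶜ ∩ Icc (x₀, y₀) (x₁, y₁)) b t ∧ b.2 = y₀ ∧ t.2 = y₁ := by
  obtain ⟨m, rfl⟩ := Int.le.dest hx
  obtain ⟨n, rfl⟩ := Int.le.dest hy
  set R : Set (ℤ × ℤ) := Icc (x₀, y₀) (x₀ + m, y₀ + n)
  set side : Bool → Set (ℤ × ℤ) := fun b => if b then {c | c.1 = x₀} else {c | c.2 = y₀ + n}
  have mem_R {i j : ℕ} (hi : i ≤ m) (hj : j ≤ n) : ((x₀ + i, y₀ + j) : ℤ × ℤ) ∈ R := by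
    simp only [R, mem_Icc_prod]
    omega
  obtain ⟨j, -, h⟩ | ⟨i, -, h⟩ := exists_reached_of_labelling
    (fun i j => reachLabel O R side (x₀ + i, y₀ + j)) m n
    (fun i hi j hj => compatible_reachLabel (by simp [squareLattice_adj, add_assoc])
      (mem_R hi.le hj) (mem_R hi hj))
    (fun i hi j hj => compatible_reachLabel (by simp [squareLattice_adj, add_assoc])
      (mem_R hi hj.le) (mem_R hi hj))
    (fun i _ j _ => by
      simpa only [reachLabel, decide_eq_decide, Nat.cast_succ, ← add_assoc]
        using hO (x₀ + i) (y₀ + j))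
    (fun j hj => reachLabel_ne (mem_R m.zero_le hj) (by simp [side]))
    (fun i hi => reachLabel_ne (mem_R hi le_rfl) (by simp [side]))
  · obtain ⟨s, hs, hconn⟩ := exists_connIn_of_reachLabel_eq h
    exact .inl ⟨s, _, hconn.mono fun c hc => ⟨by simpa using hc.2, hc.1⟩, hs, rfl⟩
  · obtain ⟨s, hs, hconn⟩ := exists_connIn_of_reachLabel_eq h
    exact .inr ⟨_, s, hconn.symm.mono fun c hc => ⟨by simpa using hc.2, hc.1⟩, by simp, hs⟩

/-! ### Local events and the Harris inequality -/

section LocalEvents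

variable {ι : Type*} {X : ι → Type*}

theorem dependsOn_mem_of_imp {s : Set ι} {A : Set (∀ i, X i)}
    (h : ∀ ω ω', (∀ i ∈ s, ω i = ω' i) → ω ∈ A → ω' ∈ A) : DependsOn (· ∈ A) s :=
  fun ω ω' hω => propext ⟨h ω ω' hω, h ω' ω fun i hi => (hω i hi).symm⟩

theorem dependsOn_mem_compl {s : Set ι} {A : Set (∀ i, X i)} (hA : DependsOn (· ∈ A) s) :
    DependsOn (· ∈ Aᶜ) s :=
  fun _ _ hω => congrArg Not (hA hω)

theorem dependsOn_mem_inter {s : Set ι} {A B : Set (∀ i, X i)} (hA : DependsOn (· ∈ A) s)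
    (hB : DependsOn (· ∈ B) s) : DependsOn (· ∈ A ∩ B) s :=
  fun _ _ hω => congrArg₂ And (hA hω) (hB hω)

theorem restrict_preimage_image {S : Finset ι} {A : Set (∀ i, X i)}
    (hA : DependsOn (· ∈ A) (S : Set ι)) : S.restrict ⁻¹' (S.restrict '' A) = A := by
  refine (subset_preimage_image S.restrict A).antisymm' ?_
  rintro ω ⟨ω', hω', heq⟩
  exact (hA fun i hi => congrFun heq ⟨i, hi⟩).mp hω'

theorem isUpperSet_image_restrict [∀ i, Preorder (X i)] {A : Set (∀ i, X i)}
    (hA : IsUpperSet A) (S : Finset ι) : IsUpperSet (S.restrict '' A) := by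
  classical
  rintro _ τ hστ ⟨ω, hω, rfl⟩
  refine ⟨Function.updateFinset ω S τ, hA (fun i => ?_) hω, ?_⟩
  · by_cases hi : i ∈ S
    · simpa [Function.updateFinset, hi] using hστ ⟨i, hi⟩
    · simp [Function.updateFinset, hi]
  · ext i
    simp [Function.updateFinset]

/-- Increasing events that depend on finitely many coordinates: the events to which the Harris
inequality is applied. -/
structure IsLocalIncreasing [∀ i, Preorder (X i)] (A : Set (∀ i, X i)) : Prop where
  isUpperSet : IsUpperSet A
  exists_dependsOn : ∃ S : Finset ι, DependsOn (· ∈ A) (S : Set ι)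

theorem IsLocalIncreasing.inter [∀ i, Preorder (X i)] {A B : Set (∀ i, X i)}
    (hA : IsLocalIncreasing A) (hB : IsLocalIncreasing B) : IsLocalIncreasing (A ∩ B) := by
  classical
  obtain ⟨hA', S, hS⟩ := hA
  obtain ⟨hB', T, hT⟩ := hB
  refine ⟨hA'.inter hB', S ∪ T, dependsOn_mem_inter (hS.mono ?_) (hT.mono ?_)⟩ <;> simp

variable [∀ i, MeasurableSpace (X i)] [∀ i, MeasurableSingletonClass (X i)]

section Countable

variable [∀ i, Countable (X i)]

theorem measurableSet_of_dependsOn {S : Finset ι} {A : Set (∀ i, X i)}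
    (hA : DependsOn (· ∈ A) (S : Set ι)) : MeasurableSet A :=
  restrict_preimage_image hA ▸ Finset.measurable_restrict S (to_countable _).measurableSet

theorem IsLocalIncreasing.measurableSet [∀ i, Preorder (X i)] {A : Set (∀ i, X i)}
    (hA : IsLocalIncreasing A) : MeasurableSet A :=
  measurableSet_of_dependsOn hA.exists_dependsOn.choose_spec

variable (μ : ∀ i, Measure (X i)) [∀ i, IsProbabilityMeasure (μ i)]

theorem infinitePi_real_eq_pi_real {S : Finset ι} {A : Set (∀ i, X i)}
    (hA : DependsOn (· ∈ A) (S : Set ι)) :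
    (Measure.infinitePi μ).real A = (Measure.pi fun i : S => μ i).real (S.restrict '' A) := by
  rw [← Measure.infinitePi_map_restrict, map_measureReal_apply (Finset.measurable_restrict S)
    (to_countable _).measurableSet, restrict_preimage_image hA]

theorem infinitePi_real_inter_of_disjoint {S T : Finset ι} {A B : Set (∀ i, X i)}
    (hA : DependsOn (· ∈ A) (S : Set ι)) (hB : DependsOn (· ∈ B) (T : Set ι))
    (hST : Disjoint S T) :
    (Measure.infinitePi μ).real (A ∩ B) =
      (Measure.infinitePi μ).real A * (Measure.infinitePi μ).real B := by
  have hindep := (ProbabilityTheory.iIndepFun_infinitePi (P := μ) (X := fun _ b => b)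
    fun _ => measurable_id).indepFun_finset S T hST fun i => measurable_pi_apply i
  have hmul := hindep.measure_inter_preimage_eq_mul (S.restrict '' A) (T.restrict '' B)
    (to_countable _).measurableSet (to_countable _).measurableSet
  change Measure.infinitePi μ (S.restrict ⁻¹' _ ∩ T.restrict ⁻¹' _) =
    Measure.infinitePi μ (S.restrict ⁻¹' _) * Measure.infinitePi μ (T.restrict ⁻¹' _) at hmul
  rw [restrict_preimage_image hA, restrict_preimage_image hB] at hmul
  simp_rw [Measure.real, hmul, ENNReal.toReal_mul]

theorem infinitePi_eq_zero_of_disjoint_supersets {E : Set (∀ i, X i)} {r : ℝ} (hr : r < 1)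
    (hE : ∀ S : Finset ι, ∃ (T : Finset ι) (A : Set (∀ i, X i)), Disjoint S T ∧
      DependsOn (· ∈ A) (T : Set ι) ∧ E ⊆ A ∧ (Measure.infinitePi μ).real A ≤ r) :
    Measure.infinitePi μ E = 0 := by
  classical
  have hr₀ : 0 ≤ r := by
    obtain ⟨T, A, -, -, -, hA⟩ := hE ∅
    exact measureReal_nonneg.trans hA
  have hpow (n : ℕ) : ∃ (S : Finset ι) (A : Set (∀ i, X i)), DependsOn (· ∈ A) (S : Set ι) ∧
      E ⊆ A ∧ (Measure.infinitePi μ).real A ≤ r ^ n := by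
    induction n with
    | zero => exact ⟨∅, univ, by simp [dependsOn_const], subset_univ E, by simp⟩
    | succ n ih =>
      obtain ⟨S, A, hAS, hEA, hA⟩ := ih
      obtain ⟨T, B, hST, hBT, hEB, hB⟩ := hE S
      refine ⟨S ∪ T, A ∩ B, dependsOn_mem_inter (hAS.mono (by simp)) (hBT.mono (by simp)),
        subset_inter hEA hEB, ?_⟩
      rw [infinitePi_real_inter_of_disjoint μ hAS hBT hST, pow_succ]
      exact mul_le_mul hA hB measureReal_nonneg (pow_nonneg hr₀ n)
  have hle (n : ℕ) : (Measure.infinitePi μ).real E ≤ r ^ n := by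
    obtain ⟨S, A, -, hEA, hA⟩ := hpow n
    exact (measureReal_mono hEA).trans hA
  exact (measureReal_eq_zero_iff).1 <|
    le_antisymm (ge_of_tendsto' (tendsto_pow_atTop_nhds_zero_of_lt_one hr₀ hr) hle)
      measureReal_nonneg

end Countable

variable [∀ i, LinearOrder (X i)] [∀ i, Finite (X i)]
  (μ : ∀ i, Measure (X i)) [∀ i, IsProbabilityMeasure (μ i)]

theorem pi_harris [Fintype ι] {A B : Set (∀ i, X i)} (hA : IsUpperSet A) (hB : IsUpperSet B) :
    (Measure.pi μ).real A * (Measure.pi μ).real B ≤ (Measure.pi μ).real (A ∩ B) := by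
  classical
  have := fun i => Fintype.ofFinite (X i)
  let w : (∀ i, X i) → ℝ := fun σ => (Measure.pi μ).real {σ}
  have hw (σ) : w σ = ∏ i, (μ i).real {σ i} := by
    simp only [w, Measure.real, Measure.pi_singleton, ENNReal.toReal_prod]
  have hsum (C : Set (∀ i, X i)) : (Measure.pi μ).real C = ∑ σ, w σ * C.indicator 1 σ := by
    simp only [indicator_apply, Pi.one_apply, mul_ite, mul_one, mul_zero, ← Finset.sum_filter]
    rw [sum_measureReal_singleton]
    congr
    ext
    simp
  have hnonneg (C : Set (∀ i, X i)) : 0 ≤ C.indicator (1 : (∀ i, X i) → ℝ) :=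
    fun σ => indicator_nonneg (fun _ _ => zero_le_one) σ
  have hmono {C : Set (∀ i, X i)} (hC : IsUpperSet C) :
      Monotone (C.indicator (1 : (∀ i, X i) → ℝ)) := fun σ τ h => by
    by_cases hσ : σ ∈ C
    · simp [hσ, hC h hσ]
    · exact (indicator_of_notMem hσ 1).trans_le (hnonneg C τ)
  have hlattice (σ τ) : w σ * w τ ≤ w (σ ⊓ τ) * w (σ ⊔ τ) := by
    simp only [hw, ← Finset.prod_mul_distrib]
    refine (Finset.prod_congr rfl fun i _ => ?_).le
    rcases le_total (σ i) (τ i) with h | h <;> simp [h, mul_comm]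
  have hone : ∑ σ, w σ = 1 := by simpa using (hsum univ).symm
  have hfkg := fkg _ _ w (fun _ => measureReal_nonneg) (hnonneg A) (hnonneg B) (hmono hA)
    (hmono hB) hlattice
  rw [hone, one_mul, ← hsum, ← hsum] at hfkg
  refine hfkg.trans_eq ?_
  simp only [hsum (A ∩ B), inter_indicator_one, Pi.mul_apply]

theorem IsLocalIncreasing.harris {A B : Set (∀ i, X i)} (hA : IsLocalIncreasing A)
    (hB : IsLocalIncreasing B) :
    (Measure.infinitePi μ).real A * (Measure.infinitePi μ).real B ≤
      (Measure.infinitePi μ).real (A ∩ B) := by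
  classical
  obtain ⟨S, hS⟩ := hA.exists_dependsOn
  obtain ⟨T, hT⟩ := hB.exists_dependsOn
  have hA' : DependsOn (· ∈ A) ((S ∪ T : Finset ι) : Set ι) := hS.mono (by simp)
  have hB' : DependsOn (· ∈ B) ((S ∪ T : Finset ι) : Set ι) := hT.mono (by simp)
  have himage : (S ∪ T).restrict '' (A ∩ B) = (S ∪ T).restrict '' A ∩ (S ∪ T).restrict '' B := by
    conv_lhs => rw [← restrict_preimage_image hB']
    exact image_inter_preimage _ _ _
  rw [infinitePi_real_eq_pi_real μ hA', infinitePi_real_eq_pi_real μ hB',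
    infinitePi_real_eq_pi_real μ (dependsOn_mem_inter hA' hB'), himage]
  exact pi_harris _ (isUpperSet_image_restrict hA.isUpperSet _)
    (isUpperSet_image_restrict hB.isUpperSet _)

end LocalEvents

section Fair

open ProbabilityTheory unitInterval

theorem bernoulli_singleton_true (p : I) : Ber(true, false, p) {true} = ENNReal.ofReal p := by
  rw [bernoulliMeasure_apply_of_mem_of_notMem _ (measurableSet_singleton _) rfl (by simp)]
  exact (ENNReal.ofReal_coe_nnreal (p := toNNReal p)).symm

theorem bernoulli_singleton_false (p : I) :
    Ber(true, false, p) {false} = ENNReal.ofReal (1 - p) := by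
  rw [bernoulliMeasure_apply_of_notMem_of_mem _ (measurableSet_singleton _) (by simp) rfl]
  exact (ENNReal.ofReal_coe_nnreal (p := toNNReal (σ p))).symm

/-- The law of a fair coin. -/
noncomputable def coin : Measure Bool := Ber(true, false, ⟨1 / 2, by norm_num, by norm_num⟩)

instance : IsProbabilityMeasure coin := by unfold coin; infer_instance

theorem coin_singleton (b : Bool) : coin {b} = 2⁻¹ := by
  have hhalf : ENNReal.ofReal (1 / 2) = 2⁻¹ := by simp [ENNReal.ofReal_inv_of_pos]
  cases b
  · rw [coin, bernoulli_singleton_false, ← hhalf]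
    norm_num
  · rw [coin, bernoulli_singleton_true, hhalf]

theorem measurePreserving_not_coin : MeasurePreserving not coin coin := by
  refine ⟨by fun_prop, Measure.ext_of_singleton fun b => ?_⟩
  rw [Measure.map_apply (by fun_prop) (measurableSet_singleton b),
    show not ⁻¹' {b} = {!b} by ext c; cases b <;> cases c <;> simp, coin_singleton, coin_singleton]

/-- Bernoulli percolation of parameter `1/2` on the index set `ι`. -/
noncomputable def fair (ι : Type*) : Measure (ι → Bool) := Measure.infinitePi fun _ => coin

instance (ι : Type*) : IsProbabilityMeasure (fair ι) := by unfold fair; infer_instance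

theorem measurePreserving_comp_fair {ι κ : Type*} {f : κ → ι} (hf : Function.Injective f) :
    MeasurePreserving (fun (ω : ι → Bool) j => ω (f j)) (fair ι) (fair κ) :=
  ⟨by fun_prop, Measure.map_infinitePi_infinitePi_of_inj hf⟩

theorem measurePreserving_not_fair {ι : Type*} :
    MeasurePreserving (fun (ω : ι → Bool) j => !ω j) (fair ι) (fair ι) := by
  refine ⟨by fun_prop, ?_⟩
  have hmap := Measure.infinitePi_map_pi (fun _ : ι => coin) (f := fun _ => not)
    fun _ => measurePreserving_not_coin.measurable
  rwa [measurePreserving_not_coin.map_eq] at hmap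

end Fair

/-! ### Crossing probabilities at the self-dual point -/

/-- Bond percolation on `ℤ²` drawn on the cells of the refined lattice: cells with two even
coordinates are the vertices and are always open, cells of mixed parity are the bonds and are
open according to `ω`, and cells with two odd coordinates are the faces and are always closed.
Lattice paths of open cells are the open paths of the bond percolation. -/
def openCells (ω : ℤ × ℤ → Bool) : Set (ℤ × ℤ) :=
  {c | (2 ∣ c.1 ∧ 2 ∣ c.2) ∨ (¬ 2 ∣ c.1 + c.2 ∧ ω c = true)}

theorem mem_openCells {ω : ℤ × ℤ → Bool} {c : ℤ × ℤ} :
    c ∈ openCells ω ↔ (2 ∣ c.1 ∧ 2 ∣ c.2) ∨ (¬ 2 ∣ c.1 + c.2 ∧ ω c = true) := Iff.rfl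

theorem monotone_openCells : Monotone openCells := fun _ _ h c hc =>
  hc.imp_right (And.imp_right (h c))

theorem noCheckerboard_openCells (ω : ℤ × ℤ → Bool) : NoCheckerboard (openCells ω) := by
  intro x y
  simp only [mem_openCells]
  omega

theorem mem_openCells_iff_notMem {ω ω' : ℤ × ℤ → Bool} {c d : ℤ × ℤ}
    (hface : 2 ∣ c.1 ∧ 2 ∣ c.2 ↔ ¬ 2 ∣ d.1 ∧ ¬ 2 ∣ d.2)
    (hbond : 2 ∣ c.1 + c.2 ↔ 2 ∣ d.1 + d.2) (h : ω' c = !ω d) :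
    c ∈ openCells ω' ↔ d ∉ openCells ω := by
  rw [mem_openCells, mem_openCells, h, hface, hbond, Bool.not_eq_true']
  cases ω d
  · simp only [reduceCtorEq, and_false, and_true, or_false]
    omega
  · simp only [reduceCtorEq, and_false, and_true, or_false]
    omega

/-- The event that some vertex of `U` is connected to some vertex of `V` by open cells of `R`. -/
def connEvent (R U V : Set (ℤ × ℤ)) : Set (ℤ × ℤ → Bool) :=
  {ω | ∃ u ∈ U, ∃ v ∈ V, ConnIn 𝕃² (openCells ω ∩ R) u v}

theorem isLocalIncreasing_connEvent {R : Set (ℤ × ℤ)} (hR : R.Finite) (U V : Set (ℤ × ℤ)) :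
    IsLocalIncreasing (connEvent R U V) := by
  refine ⟨fun ω ω' hω ⟨u, hu, v, hv, h⟩ =>
    ⟨u, hu, v, hv, h.mono (inter_subset_inter_left R (monotone_openCells hω))⟩, hR.toFinset,
    dependsOn_mem_of_imp fun ω ω' hω ⟨u, hu, v, hv, h⟩ => ⟨u, hu, v, hv, h.mono fun c hc => ?_⟩⟩
  refine ⟨?_, hc.2⟩
  rw [mem_openCells, ← hω c (by simpa using hc.2)]
  exact hc.1

/-- `A` is a local increasing event whose probability under fair percolation is at least
`p ≥ 0`. Such lower bounds multiply under intersection by the Harris inequality. -/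
structure LikelyIncreasing {ι : Type*} (p : ℝ) (A : Set (ι → Bool)) : Prop
    extends IsLocalIncreasing A where
  nonneg : 0 ≤ p
  le_measureReal : p ≤ (fair ι).real A

namespace LikelyIncreasing

variable {ι : Type*} {A B : Set (ι → Bool)} {p q : ℝ}

theorem inter (hA : LikelyIncreasing p A) (hB : LikelyIncreasing q B) :
    LikelyIncreasing (p * q) (A ∩ B) where
  toIsLocalIncreasing := hA.toIsLocalIncreasing.inter hB.toIsLocalIncreasing
  nonneg := mul_nonneg hA.nonneg hB.nonneg
  le_measureReal :=
    (mul_le_mul hA.le_measureReal hB.le_measureReal hB.nonneg measureReal_nonneg).trans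
      (hA.toIsLocalIncreasing.harris _ hB.toIsLocalIncreasing)

theorem mono (hA : LikelyIncreasing p A) (hB : IsLocalIncreasing B) (hAB : A ⊆ B) :
    LikelyIncreasing p B :=
  ⟨hB, hA.nonneg, hA.le_measureReal.trans (measureReal_mono hAB)⟩

end LikelyIncreasing

/-- Automorphisms of the refined lattice respecting vertices and bonds. -/
structure IsCellMap (f : ℤ × ℤ → ℤ × ℤ) : Prop where
  injective : Function.Injective f
  adj : ∀ {c d}, (𝕃²).Adj c d → (𝕃²).Adj (f c) (f d)
  vertex : ∀ {c}, 2 ∣ c.1 ∧ 2 ∣ c.2 → 2 ∣ (f c).1 ∧ 2 ∣ (f c).2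
  bond : ∀ {c}, ¬ 2 ∣ c.1 + c.2 → ¬ 2 ∣ (f c).1 + (f c).2

theorem isCellMap_affine (s t a b : ℤ) (hs : s.natAbs = 1) (ht : t.natAbs = 1) (ha : 2 ∣ a)
    (hb : 2 ∣ b) : IsCellMap fun c => (s * c.1 + a, t * c.2 + b) := by
  obtain rfl | rfl : s = 1 ∨ s = -1 := by omega
  all_goals
    obtain rfl | rfl : t = 1 ∨ t = -1 := by omega
  all_goals
    constructor
    · intro c d h
      simp only [Prod.ext_iff] at h ⊢
      omega
    · intro c d h
      rw [squareLattice_adj] at h ⊢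
      omega
    all_goals
      intro c
      omega

theorem isCellMap_swap : IsCellMap Prod.swap where
  injective := Prod.swap_injective
  adj h := by
    simp only [squareLattice_adj, Prod.fst_swap, Prod.snd_swap] at h ⊢
    omega
  vertex h := h.symm
  bond h := by simpa only [Prod.fst_swap, Prod.snd_swap, add_comm] using h

theorem LikelyIncreasing.map {f : ℤ × ℤ → ℤ × ℤ} {R U V R' U' V' : Set (ℤ × ℤ)} {p : ℝ}
    (h : LikelyIncreasing p (connEvent R U V)) (hf : IsCellMap f) (hR' : R'.Finite)
    (hR : MapsTo f R R') (hU : MapsTo f U U') (hV : MapsTo f V V') :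
    LikelyIncreasing p (connEvent R' U' V') where
  toIsLocalIncreasing := isLocalIncreasing_connEvent hR' U' V'
  nonneg := h.nonneg
  le_measureReal := by
    refine h.le_measureReal.trans ?_
    rw [← (measurePreserving_comp_fair hf.injective).measureReal_preimage
      h.measurableSet.nullMeasurableSet]
    refine measureReal_mono ?_
    rintro ω ⟨u, hu, v, hv, huv⟩
    exact ⟨f u, hU hu, f v, hV hv, huv.map f (fun c hc => ⟨hc.1.imp hf.vertex
      (And.imp_left hf.bond), hR hc.2⟩) fun _ _ _ _ hcd => Or.inl (hf.adj hcd)⟩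

/-- The horizontal crossing event of the rectangle `[x₀, x₁] × [y₀, y₁]`. -/
def hCross (x₀ x₁ y₀ y₁ : ℤ) : Set (ℤ × ℤ → Bool) :=
  connEvent (Icc (x₀, y₀) (x₁, y₁)) {c | c.1 = x₀} {c | c.1 = x₁}

/-- The vertical crossing event of the rectangle `[x₀, x₁] × [y₀, y₁]`. -/
def vCross (x₀ x₁ y₀ y₁ : ℤ) : Set (ℤ × ℤ → Bool) :=
  connEvent (Icc (x₀, y₀) (x₁, y₁)) {c | c.2 = y₀} {c | c.2 = y₁}

/-- The event that, inside `R`, the line `x = x₀` is connected to the segment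
`{x₁} × [a, b]`. -/
def toSegment (R : Set (ℤ × ℤ)) (x₀ x₁ a b : ℤ) : Set (ℤ × ℤ → Bool) :=
  connEvent R {c | c.1 = x₀} {c | c.1 = x₁ ∧ a ≤ c.2 ∧ c.2 ≤ b}

/-- The event that, inside `[-n, n]²`, the left side is connected to the segment `[a, b]` of the
right side. -/
def boxToSegment (n a b : ℤ) : Set (ℤ × ℤ → Bool) :=
  toSegment (Icc (-n, -n) (n, n)) (-n) n a b

theorem isLocalIncreasing_hCross (x₀ x₁ y₀ y₁ : ℤ) : IsLocalIncreasing (hCross x₀ x₁ y₀ y₁) :=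
  isLocalIncreasing_connEvent (finite_Icc _ _) _ _

theorem isLocalIncreasing_boxToSegment (n a b : ℤ) : IsLocalIncreasing (boxToSegment n a b) :=
  isLocalIncreasing_connEvent (finite_Icc _ _) _ _

section Transport

variable {x₀ x₁ y₀ y₁ x₀' x₁' y₀' y₁' : ℤ} {p : ℝ}

theorem LikelyIncreasing.hCross_congr (h : LikelyIncreasing p (hCross x₀ x₁ y₀ y₁))
    (hx : x₁' - x₀' = x₁ - x₀) (hy : y₁' - y₀' = y₁ - y₀) (hx₀ : 2 ∣ x₀' - x₀)
    (hy₀ : 2 ∣ y₀' - y₀) : LikelyIncreasing p (hCross x₀' x₁' y₀' y₁') := by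
  refine h.map (isCellMap_affine 1 1 (x₀' - x₀) (y₀' - y₀) rfl rfl hx₀ hy₀) (finite_Icc _ _)
    ?_ ?_ ?_
  all_goals
    intro c
    simp only [mem_Icc_prod, mem_ofPred_eq]
    omega

theorem LikelyIncreasing.vCross_of_hCross (h : LikelyIncreasing p (hCross x₀ x₁ y₀ y₁)) :
    LikelyIncreasing p (vCross y₀ y₁ x₀ x₁) := by
  refine h.map isCellMap_swap (finite_Icc _ _) ?_ ?_ ?_
  all_goals
    intro c
    simp only [mem_Icc_prod, mem_ofPred_eq, Prod.fst_swap, Prod.snd_swap]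
    omega

theorem LikelyIncreasing.toSegment_congr {a b a' b' : ℤ}
    (h : LikelyIncreasing p (toSegment (Icc (x₀, y₀) (x₁, y₁)) x₀ x₁ a b))
    (hx : x₁' - x₀' = x₁ - x₀) (hy : y₁' - y₀' = y₁ - y₀) (ha : a' - a = y₀' - y₀)
    (hb : b' - b = y₀' - y₀) (hx₀ : 2 ∣ x₀' - x₀) (hy₀ : 2 ∣ y₀' - y₀) :
    LikelyIncreasing p (toSegment (Icc (x₀', y₀') (x₁', y₁')) x₀' x₁' a' b') := by
  refine h.map (isCellMap_affine 1 1 (x₀' - x₀) (y₀' - y₀) rfl rfl hx₀ hy₀) (finite_Icc _ _)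
    ?_ ?_ ?_
  all_goals
    intro c
    simp only [mem_Icc_prod, mem_ofPred_eq]
    omega

theorem LikelyIncreasing.toSegment_reflect_horizontal {a b : ℤ}
    (h : LikelyIncreasing p (toSegment (Icc (x₀, y₀) (x₁, y₁)) x₀ x₁ a b)) :
    LikelyIncreasing p (toSegment (Icc (-x₁, y₀) (-x₀, y₁)) (-x₀) (-x₁) a b) := by
  refine h.map (isCellMap_affine (-1) 1 0 0 rfl rfl (by simp) (by simp)) (finite_Icc _ _)
    ?_ ?_ ?_
  all_goals
    intro c
    simp only [mem_Icc_prod, mem_ofPred_eq]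
    omega

theorem LikelyIncreasing.boxToSegment_reflect_vertical {n a b : ℤ}
    (h : LikelyIncreasing p (boxToSegment n a b)) :
    LikelyIncreasing p (boxToSegment n (-b) (-a)) := by
  refine h.map (isCellMap_affine 1 (-1) 0 0 rfl rfl (by simp) (by simp)) (finite_Icc _ _)
    ?_ ?_ ?_
  all_goals
    intro c
    simp only [mem_Icc_prod, mem_ofPred_eq]
    omega

end Transport

theorem half_le_measureReal {Ω : Type*} [MeasurableSpace Ω] {μ : Measure Ω}
    [IsProbabilityMeasure μ] {f : Ω → Ω} {A : Set Ω} (hf : MeasurePreserving f μ μ)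
    (hA : MeasurableSet A) (h : ∀ ω, ω ∈ A ∨ f ω ∈ A) : 1 / 2 ≤ μ.real A := by
  have hunion := measureReal_union_le (μ := μ) A (f ⁻¹' A)
  rw [eq_univ_of_forall (s := A ∪ f ⁻¹' A) h, probReal_univ,
    hf.measureReal_preimage hA.nullMeasurableSet] at hunion
  linarith

theorem half_le_hCross_of_odd {n : ℤ} (hn : 0 ≤ n) (hodd : ¬ 2 ∣ n) :
    LikelyIncreasing (1 / 2) (hCross 0 n 0 n) := by
  refine ⟨isLocalIncreasing_hCross 0 n 0 n, by norm_num, ?_⟩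
  -- Reflection in the antidiagonal exchanges vertices and faces: the square is self-dual.
  let τ : ℤ × ℤ → ℤ × ℤ := fun c => (n - c.2, n - c.1)
  have hτ : Function.Involutive τ := fun c => by simp [τ]
  refine half_le_measureReal (measurePreserving_not_fair.comp
    (measurePreserving_comp_fair hτ.injective))
    (isLocalIncreasing_hCross 0 n 0 n).measurableSet fun ω => ?_
  obtain ⟨l, r, h, hl, hr⟩ | ⟨b, t, h, hb, ht⟩ :=
    exists_crossing_or_dual_crossing (noCheckerboard_openCells ω) hn hn
  · exact Or.inl ⟨l, hl, r, hr, h⟩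
  refine Or.inr ⟨τ t, by simp [τ, ht], τ b, by simp [τ, hb], ConnIn.symm (h.map τ ?_ ?_)⟩
  · rintro c ⟨hc, hcI⟩
    refine ⟨(mem_openCells_iff_notMem (d := c) ?_ ?_ ?_).2 hc, ?_⟩
    · simp only [τ]
      omega
    · simp only [τ]
      omega
    · simp only [Function.comp_apply, hτ c]
    · simp only [mem_Icc_prod, τ] at hcI ⊢
      omega
  · intro c _ d _ hcd
    left
    simp only [squareLattice_adj, τ] at hcd ⊢
    omega

theorem hCross_odd_subset_even {n : ℤ} (hn : 2 ∣ n) (hn0 : 0 ≤ n) :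
    hCross 0 (n + 1) 0 (n + 1) ⊆ hCross 0 n 0 n := by
  rintro ω ⟨u, hu, v, hv, h⟩
  simp only [mem_ofPred_eq] at hu hv
  let f : ℤ × ℤ → ℤ × ℤ := fun c => (min c.1 n, min c.2 n)
  refine ⟨f u, by simp only [mem_ofPred_eq, f]; omega, f v, by simp only [mem_ofPred_eq, f]; omega,
    h.map f ?_ ?_⟩
  · rintro c ⟨hc, hcI⟩
    by_cases hle : c.1 ≤ n ∧ c.2 ≤ n
    · have : f c = c := by simp [f, hle]
      simp only [mem_Icc_prod, mem_inter_iff, this] at hcI ⊢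
      exact ⟨hc, by omega⟩
    · simp only [mem_openCells, mem_inter_iff, mem_Icc_prod, f] at hc hcI ⊢
      omega
  · intro c _ d _ hcd
    simp only [squareLattice_adj, f, Prod.mk.injEq] at hcd ⊢
    omega

theorem half_le_hCross {x₀ x₁ y₀ y₁ : ℤ} (hx : x₀ ≤ x₁) (hsq : x₁ - x₀ = y₁ - y₀)
    (hx₀ : 2 ∣ x₀) (hx₁ : 2 ∣ x₁) (hy₀ : 2 ∣ y₀) :
    LikelyIncreasing (1 / 2) (hCross x₀ x₁ y₀ y₁) :=
  ((half_le_hCross_of_odd (n := x₁ - x₀ + 1) (by omega) (by omega)).mono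
    (isLocalIncreasing_hCross _ _ _ _) (hCross_odd_subset_even (by omega) (by omega))).hCross_congr
    (by omega) (by omega) (by omega) (by omega)

theorem half_le_vCross {x₀ x₁ y₀ y₁ : ℤ} (hx : x₀ ≤ x₁) (hsq : x₁ - x₀ = y₁ - y₀)
    (hx₀ : 2 ∣ x₀) (hx₁ : 2 ∣ x₁) (hy₀ : 2 ∣ y₀) :
    LikelyIncreasing (1 / 2) (vCross x₀ x₁ y₀ y₁) :=
  (half_le_hCross (by omega) hsq.symm hy₀ (by omega) hx₀).vCross_of_hCross

theorem boxToSegment_half {n : ℤ} (hn : 2 ∣ n) (hn0 : 0 ≤ n) :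
    LikelyIncreasing (1 / 4) (boxToSegment n 0 n) := by
  refine ⟨isLocalIncreasing_boxToSegment n 0 n, by norm_num, ?_⟩
  have hcover : hCross (-n) n (-n) n ⊆ boxToSegment n 0 n ∪ boxToSegment n (-n) 0 := by
    rintro ω ⟨u, hu, v, hv, h⟩
    have := h.right_mem.2
    simp only [mem_Icc_prod, mem_ofPred_eq] at this hv
    obtain h0 | h0 := le_total 0 v.2
    · exact Or.inl ⟨u, hu, v, ⟨hv, h0, by omega⟩, h⟩
    · exact Or.inr ⟨u, hu, v, ⟨hv, by omega, h0⟩, h⟩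
  have hreflect : (fair (ℤ × ℤ)).real (boxToSegment n (-n) 0) ≤
      (fair (ℤ × ℤ)).real (boxToSegment n 0 n) := by
    have h : LikelyIncreasing _ (boxToSegment n (-n) 0) :=
      ⟨isLocalIncreasing_boxToSegment n (-n) 0, measureReal_nonneg, le_rfl⟩
    simpa using h.boxToSegment_reflect_vertical.le_measureReal
  have hsquare := (half_le_hCross (x₀ := -n) (x₁ := n) (y₀ := -n) (y₁ := n) (by omega) rfl
    (by omega) hn (by omega)).le_measureReal
  have := hsquare.trans ((measureReal_mono hcover).trans (measureReal_union_le _ _))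
  linarith

theorem boxToSegment_subset_union {n a s b : ℤ} (hn : 2 ∣ n) (hs : 2 ∣ s) (hsb : s + 2 ≤ b)
    (hbn : b ≤ n) (hns : -n ≤ s) :
    boxToSegment n a b ⊆ boxToSegment n a s ∪ boxToSegment n (s + 2) b := by
  rintro ω ⟨u, hu, v, ⟨hv, hav, hvb⟩, h⟩
  obtain hvs | hvs | hvs : v.2 ≤ s ∨ v.2 = s + 1 ∨ s + 2 ≤ v.2 := by omega
  · exact Or.inl ⟨u, hu, v, ⟨hv, hav, hvs⟩, h⟩
  · refine Or.inr ⟨u, hu, (n, s + 2), ⟨rfl, le_rfl, hsb⟩, h.tail ?_ ⟨Or.inl ?_, ?_⟩⟩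
    · simp only [squareLattice_adj]
      omega
    · dsimp only
      omega
    · simp only [mem_Icc_prod]
      omega
  · exact Or.inr ⟨u, hu, v, ⟨hv, hvs, hvb⟩, h⟩

theorem exists_boxToSegment_both (m : ℕ) : ∃ α : ℕ, α ≤ m ∧
    LikelyIncreasing (1 / 8) (boxToSegment (2 * m) 0 (2 * α)) ∧
    LikelyIncreasing (1 / 8) (boxToSegment (2 * m) (2 * α) (2 * m)) := by
  classical
  have hhalf := boxToSegment_half (n := 2 * m) (by simp) (by omega)
  have hlocal := isLocalIncreasing_boxToSegment (2 * m)
  have hex : ∃ α : ℕ, 1 / 8 ≤ (fair (ℤ × ℤ)).real (boxToSegment (2 * m) 0 (2 * α)) :=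
    ⟨m, by linarith [hhalf.le_measureReal]⟩
  have hle : Nat.find hex ≤ m := Nat.find_min' hex (by linarith [hhalf.le_measureReal])
  refine ⟨Nat.find hex, hle, ⟨hlocal _ _, by norm_num, Nat.find_spec hex⟩,
    ⟨hlocal _ _, by norm_num, ?_⟩⟩
  rcases hα : Nat.find hex with _ | β
  · simpa using le_trans (by norm_num) hhalf.le_measureReal
  have hβ : (fair (ℤ × ℤ)).real (boxToSegment (2 * m) 0 (2 * β)) < 1 / 8 :=
    not_le.1 (Nat.find_min hex (by omega))
  have hsplit := boxToSegment_subset_union (n := 2 * m) (a := 0) (s := 2 * β) (b := 2 * m)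
    (by simp) (by simp) (by omega) le_rfl (by omega)
  have := hhalf.le_measureReal.trans ((measureReal_mono hsplit).trans (measureReal_union_le _ _))
  push_cast
  rw [mul_add, mul_one]
  linarith

/-! ### Russo–Seymour–Welsh theory -/

theorem connIn_vertical {S : Set (ℤ × ℤ)} {x y₀ y₁ : ℤ} (hy : y₀ ≤ y₁)
    (hS : ∀ y, y₀ ≤ y → y ≤ y₁ → (x, y) ∈ S) : ConnIn 𝕃² S (x, y₀) (x, y₁) := by
  induction y₁, hy using Int.leInduction with
  | base => exact .refl (hS y₀ le_rfl le_rfl)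
  | succ y hy ih =>
    exact (ih fun z h₀ h₁ => hS z h₀ (by omega)).tail (by simp [squareLattice_adj])
      (hS _ (by omega) le_rfl)

theorem connIn_preimage_iff {V : Type*} {G : SimpleGraph V} {f : V → V} {S : Set V} {a b : V}
    (hf : Function.Involutive f) (hadj : ∀ {c d}, G.Adj c d → G.Adj (f c) (f d)) :
    ConnIn G (f ⁻¹' S) a b ↔ ConnIn G S (f a) (f b) := by
  refine ⟨fun h => h.map f (fun _ hc => hc) fun _ _ _ _ hcd => Or.inl (hadj hcd), fun h => ?_⟩
  have := h.map (S' := f ⁻¹' S) f (fun c hc => by rwa [mem_preimage, hf c])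
    fun _ _ _ _ hcd => Or.inl (hadj hcd)
  rwa [hf, hf] at this

theorem ConnIn.prolong_vertically {B : Set (ℤ × ℤ)} {d u : ℤ × ℤ} {x y₀ y₁ : ℤ}
    (hdu : ConnIn 𝕃² B d u) (hd : d.1 = x) (hu : u.1 = x) (h₀ : y₀ ≤ d.2) (h₁ : u.2 ≤ y₁) :
    ConnIn 𝕃² ({c | ConnIn 𝕃² B d c} ∪ {c | c.1 = x + 1 ∧ (c.2 ≤ d.2 ∨ u.2 ≤ c.2)})
      (x + 1, y₀) (x + 1, y₁) := by
  set B' := {c | ConnIn 𝕃² B d c} ∪ {c | c.1 = x + 1 ∧ (c.2 ≤ d.2 ∨ u.2 ≤ c.2)}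
  have enter : ConnIn 𝕃² B' (x + 1, d.2) d :=
    ConnIn.tail (b := (x + 1, d.2)) (.refl (Or.inr ⟨rfl, Or.inl le_rfl⟩))
      (by simp [squareLattice_adj, hd]) (Or.inl (ConnIn.refl hdu.left_mem))
  have leave : ConnIn 𝕃² B' u (x + 1, u.2) :=
    ConnIn.tail (.refl (Or.inl hdu)) (by simp [squareLattice_adj, hu])
      (Or.inr ⟨rfl, Or.inr le_rfl⟩)
  have lower : ConnIn 𝕃² B' (x + 1, y₀) (x + 1, d.2) :=
    connIn_vertical h₀ fun _ _ hy => Or.inr ⟨rfl, Or.inl hy⟩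
  have upper : ConnIn 𝕃² B' (x + 1, u.2) (x + 1, y₁) :=
    connIn_vertical h₁ fun _ hy _ => Or.inr ⟨rfl, Or.inr hy⟩
  exact lower.trans <| enter.trans <| (hdu.cluster.mono subset_union_left).trans <|
    leave.trans upper

theorem exists_connIn_of_interlaced_right {A B : Set (ℤ × ℤ)} {l r d u : ℤ × ℤ} {y₀ y₁ : ℤ}
    (hA : ∀ c ∈ A, c.1 ≤ r.1 ∧ y₀ ≤ c.2 ∧ c.2 ≤ y₁) (hB : ∀ c ∈ B, l.1 ≤ c.1 ∧ c.1 ≤ r.1)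
    (hlr : ConnIn 𝕃² A l r) (hdu : ConnIn 𝕃² B d u) (hd : d.1 = r.1) (hu : u.1 = r.1)
    (hdr : d.2 ≤ r.2) (hru : r.2 ≤ u.2) : ∃ c, ConnIn 𝕃² A l c ∧ ConnIn 𝕃² B d c := by
  -- Prolong the first path by one step to the right and the second one by two vertical rays.
  let A' : Set (ℤ × ℤ) := {c | ConnIn 𝕃² A l c} ∪ {(r.1 + 1, r.2)}
  let B' : Set (ℤ × ℤ) :=
    {c | ConnIn 𝕃² B d c} ∪ {c | c.1 = r.1 + 1 ∧ (c.2 ≤ d.2 ∨ u.2 ≤ c.2)}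
  have hlA := hA l hlr.left_mem
  have hrA := hA r hlr.right_mem
  have horizontal : ConnIn 𝕃² A' l (r.1 + 1, r.2) :=
    (hlr.cluster.mono subset_union_left).tail (by simp [squareLattice_adj]) (Or.inr rfl)
  have vertical : ConnIn 𝕃² B' (r.1 + 1, min y₀ d.2) (r.1 + 1, max y₁ u.2) :=
    hdu.prolong_vertically hd hu (min_le_right _ _) (le_max_right _ _)
  have hA' (c) (hc : c ∈ A') : min y₀ d.2 ≤ c.2 ∧ c.2 ≤ max y₁ u.2 := by
    obtain hc | rfl := hc
    · have := hA c (ConnIn.right_mem hc)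
      omega
    · omega
  have hB' (c) (hc : c ∈ B') : l.1 ≤ c.1 ∧ c.1 ≤ r.1 + 1 := by
    obtain hc | hc := hc
    · have := hB c (ConnIn.right_mem hc)
      omega
    · have := hc.1
      omega
  obtain ⟨c, hcA, hcB⟩ := inter_nonempty_of_connIn_crossing hA' hB' horizontal vertical
  obtain hcA | rfl := hcA
  · obtain hcB | hcB := hcB
    · exact ⟨c, hcA, hcB⟩
    · have := hA c (ConnIn.right_mem hcA)
      have := hcB.1
      omega
  · obtain hcB | ⟨-, hcB⟩ := hcB
    · have := hB _ (ConnIn.right_mem hcB)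
      omega
    · obtain h | h : r.2 = d.2 ∨ r.2 = u.2 := by omega
      · exact ⟨d, (Prod.ext hd.symm h : r = d) ▸ hlr, .refl hdu.left_mem⟩
      · exact ⟨u, (Prod.ext hu.symm h : r = u) ▸ hlr, hdu⟩

theorem exists_connIn_of_interlaced_left {A B : Set (ℤ × ℤ)} {l r d u : ℤ × ℤ} {y₀ y₁ : ℤ}
    (hA : ∀ c ∈ A, r.1 ≤ c.1 ∧ y₀ ≤ c.2 ∧ c.2 ≤ y₁) (hB : ∀ c ∈ B, r.1 ≤ c.1 ∧ c.1 ≤ l.1)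
    (hlr : ConnIn 𝕃² A l r) (hdu : ConnIn 𝕃² B d u) (hd : d.1 = r.1) (hu : u.1 = r.1)
    (hdr : d.2 ≤ r.2) (hru : r.2 ≤ u.2) : ∃ c, ConnIn 𝕃² A l c ∧ ConnIn 𝕃² B d c := by
  let f : ℤ × ℤ → ℤ × ℤ := fun c => (-c.1, c.2)
  have hf : Function.Involutive f := fun c => by simp [f]
  have hadj {c d : ℤ × ℤ} (h : (𝕃²).Adj c d) : (𝕃²).Adj (f c) (f d) := by
    simp only [squareLattice_adj, f] at h ⊢
    omega
  have hmap {S a b} (h : ConnIn 𝕃² S a b) : ConnIn 𝕃² (f ⁻¹' S) (f a) (f b) :=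
    (connIn_preimage_iff hf hadj).2 (by rwa [hf, hf])
  have hA' (c) (hc : c ∈ f ⁻¹' A) : c.1 ≤ (f r).1 ∧ y₀ ≤ c.2 ∧ c.2 ≤ y₁ := by
    have := hA _ hc
    simp only [f] at this ⊢
    omega
  have hB' (c) (hc : c ∈ f ⁻¹' B) : (f l).1 ≤ c.1 ∧ c.1 ≤ (f r).1 := by
    have := hB _ hc
    simp only [f] at this ⊢
    omega
  obtain ⟨c, hlc, hdc⟩ := exists_connIn_of_interlaced_right hA' hB' (hmap hlr) (hmap hdu)
    (by simp [f, hd]) (by simp [f, hu]) hdr hru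
  rw [connIn_preimage_iff hf hadj, hf] at hlc hdc
  exact ⟨f c, hlc, hdc⟩

theorem connIn_of_vertical_crossing {S : Set (ℤ × ℤ)} {x₀ x₁ y₀ y₁ : ℤ} {b t u v : ℤ × ℤ}
    (hbt : ConnIn 𝕃² (S ∩ Icc (x₀, y₀) (x₁, y₁)) b t) (hb : b.2 = y₀) (ht : t.2 = y₁)
    (huv : ConnIn 𝕃² (S ∩ Icc (x₀, y₀) (x₁, y₁)) u v) (hu : u.1 = x₀) (hv : v.1 = x₁) :
    ConnIn 𝕃² (S ∩ Icc (x₀, y₀) (x₁, y₁)) b u ∧ ConnIn 𝕃² (S ∩ Icc (x₀, y₀) (x₁, y₁)) b v := by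
  have hbox (c) (hc : c ∈ S ∩ Icc (x₀, y₀) (x₁, y₁)) := mem_Icc_prod.1 hc.2
  obtain ⟨c, huc, hbc⟩ := exists_connIn_of_crossing (fun c hc => by have := hbox c hc; omega)
    (fun c hc => by have := hbox c hc; omega) huv hbt
  exact ⟨hbc.trans huc.symm, hbc.trans (huc.symm.trans huv)⟩

section Glue

variable {ω : ℤ × ℤ → Bool} {n n' α α' : ℤ} {g : ℤ × ℤ}

/-- The hub of the gluing construction: inside `[-n', n'] × [α' - n', α' + n']` the cell `g` is
connected to the vertical line `x = s` both below height `0` and above height `2 α'`. -/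
def IsHub (ω : ℤ × ℤ → Bool) (n' α' : ℤ) (g : ℤ × ℤ) (s : ℤ) : Prop :=
  ∃ d u, ConnIn 𝕃² (openCells ω ∩ Icc (-n', α' - n') (n', α' + n')) g d ∧
    ConnIn 𝕃² (openCells ω ∩ Icc (-n', α' - n') (n', α' + n')) g u ∧
    d.1 = s ∧ u.1 = s ∧ d.2 ≤ 0 ∧ 2 * α' ≤ u.2

theorem IsHub.exists_connIn_right (hg : IsHub ω n' α' g n') (hn : n' ≤ n) (hα : α ≤ 2 * α')
    (h : ω ∈ toSegment (Icc (n' - 2 * n, -n) (n', n)) (n' - 2 * n) n' 0 α) :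
    ∃ l, l.1 = n' - 2 * n ∧ ∃ c,
      ConnIn 𝕃² (openCells ω ∩ Icc (n' - 2 * n, -n) (n', n)) l c ∧
      ConnIn 𝕃² (openCells ω ∩ Icc (-n', α' - n') (n', α' + n')) g c := by
  obtain ⟨d, u, hgd, hgu, hd, hu, hd0, hu0⟩ := hg
  obtain ⟨l, hl, r, ⟨hr, hr0, hrα⟩, hlr⟩ := h
  simp only [mem_ofPred_eq] at hl
  obtain ⟨c, hlc, hdc⟩ := exists_connIn_of_interlaced_right (y₀ := -n) (y₁ := n)
    (fun c hc => by have := mem_Icc_prod.1 hc.2; omega)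
    (fun c hc => by have := mem_Icc_prod.1 hc.2; omega)
    hlr (hgd.symm.trans hgu) (by omega) (by omega) (by omega) (by omega)
  exact ⟨l, hl, c, hlc, hgd.trans hdc⟩

theorem IsHub.exists_connIn_left (hg : IsHub ω n' α' g (-n')) (hn : n' ≤ n) (hα : α ≤ 2 * α')
    (h : ω ∈ toSegment (Icc (-n', -n) (2 * n - n', n)) (2 * n - n') (-n') 0 α) :
    ∃ l, l.1 = 2 * n - n' ∧ ∃ c,
      ConnIn 𝕃² (openCells ω ∩ Icc (-n', -n) (2 * n - n', n)) l c ∧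
      ConnIn 𝕃² (openCells ω ∩ Icc (-n', α' - n') (n', α' + n')) g c := by
  obtain ⟨d, u, hgd, hgu, hd, hu, hd0, hu0⟩ := hg
  obtain ⟨l, hl, r, ⟨hr, hr0, hrα⟩, hlr⟩ := h
  simp only [mem_ofPred_eq] at hl
  obtain ⟨c, hlc, hdc⟩ := exists_connIn_of_interlaced_left (y₀ := -n) (y₁ := n)
    (fun c hc => by have := mem_Icc_prod.1 hc.2; omega)
    (fun c hc => by have := mem_Icc_prod.1 hc.2; omega)
    hlr (hgd.symm.trans hgu) (by omega) (by omega) (by omega) (by omega)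
  exact ⟨l, hl, c, hlc, hgd.trans hdc⟩

theorem exists_isHub
    (hv : ω ∈ vCross (-n') n' (α' - n') (α' + n'))
    (hru : ω ∈ toSegment (Icc (-n', α' - n') (n', α' + n')) (-n') n' (2 * α') (α' + n'))
    (hrd : ω ∈ toSegment (Icc (-n', α' - n') (n', α' + n')) (-n') n' (α' - n') 0)
    (hlu : ω ∈ toSegment (Icc (-n', α' - n') (n', α' + n')) n' (-n') (2 * α') (α' + n'))
    (hld : ω ∈ toSegment (Icc (-n', α' - n') (n', α' + n')) n' (-n') (α' - n') 0) :
    ∃ g, IsHub ω n' α' g n' ∧ IsHub ω n' α' g (-n') := by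
  obtain ⟨g, hg, t, ht, hgt⟩ := hv
  obtain ⟨_, ha₁, b₁, ⟨hb₁, hu₁, -⟩, h₁⟩ := hru
  obtain ⟨_, ha₂, b₂, ⟨hb₂, -, hd₂⟩, h₂⟩ := hrd
  obtain ⟨_, ha₃, b₃, ⟨hb₃, hu₃, -⟩, h₃⟩ := hlu
  obtain ⟨_, ha₄, b₄, ⟨hb₄, -, hd₄⟩, h₄⟩ := hld
  exact ⟨g, ⟨b₂, b₁, (connIn_of_vertical_crossing hgt hg ht h₂ ha₂ hb₂).2,
    (connIn_of_vertical_crossing hgt hg ht h₁ ha₁ hb₁).2, hb₂, hb₁, hd₂, hu₁⟩,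
    ⟨b₄, b₃, (connIn_of_vertical_crossing hgt hg ht h₄.symm hb₄ ha₄).1,
    (connIn_of_vertical_crossing hgt hg ht h₃.symm hb₃ ha₃).1, hb₄, hb₃, hd₄, hu₃⟩⟩

theorem mem_hCross_of_isHub (hr : IsHub ω n' α' g n') (hl : IsHub ω n' α' g (-n'))
    (hn : n' ≤ n) (hn' : n ≤ 2 * n') (hα : α ≤ 2 * α') (hα₀ : 0 ≤ α') (hα' : α' ≤ n')
    (hleft : ω ∈ toSegment (Icc (n' - 2 * n, -n) (n', n)) (n' - 2 * n) n' 0 α)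
    (hright : ω ∈ toSegment (Icc (-n', -n) (2 * n - n', n)) (2 * n - n') (-n') 0 α) :
    ω ∈ hCross (n' - 2 * n) (2 * n - n') (-n) (2 * n') := by
  obtain ⟨l₁, hl₁, c₁, hlc₁, hgc₁⟩ := hr.exists_connIn_right hn hα hleft
  obtain ⟨l₂, hl₂, c₂, hlc₂, hgc₂⟩ := hl.exists_connIn_left hn hα hright
  have hbox {x₀ x₁ y₀ y₁ : ℤ} (hx₀ : n' - 2 * n ≤ x₀) (hx₁ : x₁ ≤ 2 * n - n') (hy₀ : -n ≤ y₀)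
      (hy₁ : y₁ ≤ 2 * n') : openCells ω ∩ Icc (x₀, y₀) (x₁, y₁) ⊆
        openCells ω ∩ Icc (n' - 2 * n, -n) (2 * n - n', 2 * n') :=
    inter_subset_inter_right _ (Icc_subset_Icc ⟨hx₀, hy₀⟩ ⟨hx₁, hy₁⟩)
  refine ⟨l₁, hl₁, l₂, hl₂, ?_⟩
  exact (hlc₁.mono (hbox (by omega) (by omega) (by omega) (by omega))).trans <|
    ((hgc₁.symm.trans hgc₂).mono (hbox (by omega) (by omega) (by omega) (by omega))).trans
      (hlc₂.symm.mono (hbox (by omega) (by omega) (by omega) (by omega)))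

/-- Crossings towards short segments of the sides are glued to a hub. -/
theorem LikelyIncreasing.hCross_of_boxToSegment {p p' : ℝ} (hn2 : 2 ∣ n) (hn2' : 2 ∣ n')
    (hα2' : 2 ∣ α') (hn : n' ≤ n) (hn' : n ≤ 2 * n') (hα : α ≤ 2 * α') (hα₀ : 0 ≤ α')
    (hα' : α' ≤ n') (h : LikelyIncreasing p (boxToSegment n 0 α))
    (h' : LikelyIncreasing p' (boxToSegment n' α' n')) :
    LikelyIncreasing (p * p * (p' * p' * (p' * p') * (1 / 2)))
      (hCross (n' - 2 * n) (2 * n - n') (-n) (2 * n')) := by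
  have hleft : LikelyIncreasing p
      (toSegment (Icc (n' - 2 * n, -n) (n', n)) (n' - 2 * n) n' 0 α) := by
    refine h.toSegment_congr ?_ ?_ ?_ ?_ ?_ ?_ <;> omega
  have hright : LikelyIncreasing p
      (toSegment (Icc (-n', -n) (2 * n - n', n)) (2 * n - n') (-n') 0 α) := by
    simpa using hleft.toSegment_reflect_horizontal
  have hru : LikelyIncreasing p'
      (toSegment (Icc (-n', α' - n') (n', α' + n')) (-n') n' (2 * α') (α' + n')) := by
    refine h'.toSegment_congr ?_ ?_ ?_ ?_ ?_ ?_ <;> omega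
  have hrd : LikelyIncreasing p'
      (toSegment (Icc (-n', α' - n') (n', α' + n')) (-n') n' (α' - n') 0) := by
    refine h'.boxToSegment_reflect_vertical.toSegment_congr ?_ ?_ ?_ ?_ ?_ ?_ <;> omega
  have hlu := hru.toSegment_reflect_horizontal
  have hld := hrd.toSegment_reflect_horizontal
  rw [neg_neg] at hlu hld
  have hv : LikelyIncreasing (1 / 2) (vCross (-n') n' (α' - n') (α' + n')) :=
    half_le_vCross (by omega) (by omega) (by omega) hn2' (by omega)
  refine ((hleft.inter hright).inter (((hru.inter hrd).inter (hlu.inter hld)).inter hv)).mono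
    (isLocalIncreasing_hCross _ _ _ _) ?_
  rintro ω ⟨⟨hleft, hright⟩, ⟨⟨hru, hrd⟩, hlu, hld⟩, hv⟩
  obtain ⟨g, hgr, hgl⟩ := exists_isHub hv hru hrd hlu hld
  exact mem_hCross_of_isHub hgr hgl hn hn' hα hα₀ hα' hleft hright

end Glue

theorem LikelyIncreasing.hCross_double {c : ℝ} {W h : ℤ} (hW : 2 ∣ W) (hh : 2 ∣ h) (h₀ : 0 ≤ h)
    (hhW : h ≤ W) (H : LikelyIncreasing c (hCross 0 W 0 h)) :
    LikelyIncreasing (c * c * (1 / 2)) (hCross 0 (2 * W - h) 0 h) := by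
  have H' : LikelyIncreasing c (hCross (W - h) (2 * W - h) 0 h) := by
    refine H.hCross_congr ?_ ?_ ?_ ?_ <;> omega
  have hv : LikelyIncreasing (1 / 2) (vCross (W - h) W 0 h) := by
    refine half_le_vCross ?_ ?_ ?_ ?_ ?_ <;> omega
  refine ((H.inter H').inter hv).mono (isLocalIncreasing_hCross _ _ _ _) ?_
  rintro ω ⟨⟨⟨l₁, hl₁, r₁, hr₁, h₁⟩, l₂, hl₂, r₂, hr₂, h₂⟩, b, hb, t, ht, hbt⟩
  simp only [mem_ofPred_eq] at hl₁ hr₁ hl₂ hr₂ hb ht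
  obtain ⟨u, hlu, hbu⟩ := exists_connIn_of_crossing
    (fun c hc => by have := mem_Icc_prod.1 hc.2; omega)
    (fun c hc => by have := mem_Icc_prod.1 hc.2; omega) h₁ hbt
  obtain ⟨v, hlv, hbv⟩ := exists_connIn_of_crossing
    (fun c hc => by have := mem_Icc_prod.1 hc.2; omega)
    (fun c hc => by have := mem_Icc_prod.1 hc.2; omega) h₂ hbt
  have hbox {x₀ x₁ : ℤ} (hx₀ : 0 ≤ x₀) (hx₁ : x₁ ≤ 2 * W - h) :
      openCells ω ∩ Icc (x₀, 0) (x₁, h) ⊆ openCells ω ∩ Icc (0, 0) (2 * W - h, h) :=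
    inter_subset_inter_right _ (Icc_subset_Icc ⟨hx₀, le_rfl⟩ ⟨hx₁, le_rfl⟩)
  exact ⟨l₁, hl₁, r₂, hr₂, (hlu.mono (hbox le_rfl (by omega))).trans <|
    ((hbu.symm.trans hbv).mono (hbox (by omega) (by omega))).trans <|
      (hlv.symm.trans h₂).mono (hbox (by omega) le_rfl)⟩

theorem hCross_subset_of_le {x₀ x₁ x₁' y₀ y₁ : ℤ} (h : x₀ ≤ x₁) (h' : x₁ ≤ x₁') :
    hCross x₀ x₁' y₀ y₁ ⊆ hCross x₀ x₁ y₀ y₁ := by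
  rintro ω ⟨l, hl, r, hr, hlr⟩
  simp only [mem_ofPred_eq] at hl hr
  obtain rfl | h := h.eq_or_lt
  · have := mem_Icc_prod.1 hlr.left_mem.2
    exact ⟨l, hl, l, hl, .refl ⟨hlr.left_mem.1, mem_Icc_prod.2 (by omega)⟩⟩
  obtain ⟨w, w', hlw, hadj, hw', hw'₁⟩ := hlr.exists_exit (T := {c | c.1 < x₁})
    (by simp only [mem_ofPred_eq]; omega) (by simp only [mem_ofPred_eq]; omega)
  have hw := hlw.right_mem.2
  simp only [mem_ofPred_eq, not_lt] at hw hw'₁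
  rw [squareLattice_adj] at hadj
  refine ⟨l, hl, w', by simp only [mem_ofPred_eq]; omega,
    (hlw.mono ?_).tail (squareLattice_adj.2 hadj) ⟨hw'.1, ?_⟩⟩
  · rintro c ⟨⟨hc, hbox⟩, hc₁⟩
    simp only [mem_ofPred_eq, mem_Icc_prod] at hbox hc₁
    exact ⟨hc, mem_Icc_prod.2 (by omega)⟩
  · have := mem_Icc_prod.1 hw'.2
    exact mem_Icc_prod.2 (by omega)

theorem exists_le_two_mul_of_le_self {α : ℕ → ℕ} (hα : ∀ m, α m ≤ m) (M : ℕ) :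
    ∃ m ≥ M, α (m + 3 * m / 4) ≤ 2 * α m := by
  by_contra! hcon
  -- Otherwise `α m / m` would grow by a factor `2 / (7 / 4)` at each step `m ↦ m + 3 * m / 4`.
  have hgrowth (j : ℕ) : ∃ m ≥ M, 1 ≤ m ∧ (8 / 7 : ℝ) ^ j * m ≤ (2 * M + 2) * α m := by
    induction j with
    | zero =>
      refine ⟨M + 1 + 3 * (M + 1) / 4, by omega, by omega, ?_⟩
      have hle : M + 1 + 3 * (M + 1) / 4 ≤ 2 * M + 2 := by omega
      have hpos : 1 ≤ α (M + 1 + 3 * (M + 1) / 4) := by have := hcon (M + 1) (by omega); omega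
      rw [pow_zero, one_mul]
      exact_mod_cast hle.trans (Nat.le_mul_of_pos_right _ hpos)
    | succ j ih =>
      obtain ⟨m, hM, hm, ih⟩ := ih
      refine ⟨m + 3 * m / 4, by omega, by omega, ?_⟩
      have hle : ((m + 3 * m / 4 : ℕ) : ℝ) ≤ 7 / 4 * m := by
        have : 4 * (m + 3 * m / 4) ≤ 7 * m := by omega
        have : 4 * ((m + 3 * m / 4 : ℕ) : ℝ) ≤ 7 * m := by exact_mod_cast this
        linarith
      have hlt : (2 * α m : ℝ) ≤ α (m + 3 * m / 4) := by exact_mod_cast (hcon m hM).le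
      calc (8 / 7 : ℝ) ^ (j + 1) * ((m + 3 * m / 4 : ℕ) : ℝ)
          ≤ (8 / 7) ^ (j + 1) * (7 / 4 * m) := by gcongr
        _ = 2 * ((8 / 7) ^ j * m) := by ring
        _ ≤ 2 * ((2 * M + 2) * α m) := by gcongr
        _ = (2 * M + 2) * (2 * α m) := by ring
        _ ≤ (2 * M + 2) * α (m + 3 * m / 4) := by gcongr
  obtain ⟨j, hj⟩ := pow_unbounded_of_one_lt (2 * M + 2 : ℝ) (y := 8 / 7) (by norm_num)
  obtain ⟨m, -, hm, h⟩ := hgrowth j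
  have hαm : (α m : ℝ) ≤ m := by exact_mod_cast hα m
  have hm' : (0 : ℝ) < m := by exact_mod_cast hm
  nlinarith

theorem exists_hCross_three_mul : ∃ c : ℝ, 0 < c ∧
    ∀ M : ℕ, ∃ h : ℤ, M ≤ h ∧ 2 ∣ h ∧ LikelyIncreasing c (hCross 0 (3 * h) 0 h) := by
  choose α hα hnear hfar using exists_boxToSegment_both
  let c₀ : ℝ := 1 / 8 * (1 / 8) * (1 / 8 * (1 / 8) * (1 / 8 * (1 / 8)) * (1 / 2))
  let c₁ := c₀ * c₀ * (1 / 2)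
  let c₂ := c₁ * c₁ * (1 / 2)
  refine ⟨c₂ * c₂ * (1 / 2), by positivity, fun M => ?_⟩
  obtain ⟨m', hM, hm'⟩ := exists_le_two_mul_of_le_self hα (M + 7)
  set m := m' + 3 * m' / 4
  have hαm' := hα m'
  have hglue : LikelyIncreasing c₀ (hCross (2 * m' - 2 * (2 * m)) (2 * (2 * m) - 2 * m')
      (-(2 * m)) (2 * (2 * m'))) := by
    refine (hnear m).hCross_of_boxToSegment ?_ ?_ ?_ ?_ ?_ ?_ ?_ ?_ (hfar m') <;> omega
  have hbase : LikelyIncreasing c₀ (hCross 0 (8 * m - 4 * m') 0 (2 * m + 4 * m')) := by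
    refine hglue.hCross_congr ?_ ?_ ?_ ?_ <;> omega
  refine ⟨2 * m + 4 * m', by omega, by omega, LikelyIncreasing.mono
    (((hbase.hCross_double ?_ ?_ ?_ ?_).hCross_double ?_ ?_ ?_ ?_).hCross_double ?_ ?_ ?_ ?_)
    (isLocalIncreasing_hCross _ _ _ _) (hCross_subset_of_le ?_ ?_)⟩
  all_goals omega

/-! ### Absence of percolation at the self-dual point -/

/-- The dual configuration, in which the translate of a cell by `(1, 1)` is open if and only if
the cell is closed. -/
def dual (ω : ℤ × ℤ → Bool) (c : ℤ × ℤ) : Bool :=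
  !ω (c.1 - 1, c.2 - 1)

theorem mem_openCells_dual {ω : ℤ × ℤ → Bool} {c : ℤ × ℤ} :
    c ∈ openCells (dual ω) ↔ (c.1 - 1, c.2 - 1) ∉ openCells ω :=
  mem_openCells_iff_notMem (by omega) (by omega) rfl

theorem measurePreserving_dual : MeasurePreserving dual (fair (ℤ × ℤ)) (fair (ℤ × ℤ)) :=
  measurePreserving_not_fair.comp (measurePreserving_comp_fair
    (f := fun c : ℤ × ℤ => (c.1 - 1, c.2 - 1)) fun c d h => by
      simp only [Prod.ext_iff] at h ⊢
      omega)

theorem ConnIn.of_dual {ω : ℤ × ℤ → Bool} {x₀ x₁ y₀ y₁ : ℤ} {a b : ℤ × ℤ}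
    (h : ConnIn 𝕃² (openCells (dual ω) ∩ Icc (x₀ + 1, y₀ + 1) (x₁ + 1, y₁ + 1)) a b) :
    ConnIn 𝕃² ((openCells ω)ᶜ ∩ Icc (x₀, y₀) (x₁, y₁)) (a.1 - 1, a.2 - 1) (b.1 - 1, b.2 - 1) := by
  refine h.map (fun c => (c.1 - 1, c.2 - 1)) (fun c hc => ⟨mem_openCells_dual.1 hc.1, ?_⟩)
    fun c _ d _ hcd => Or.inl ?_
  · have := hc.2
    simp only [mem_Icc_prod] at this ⊢
    omega
  · rw [squareLattice_adj] at hcd ⊢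
    omega

/-- The event that each of the four rectangles making up the annulus `[-b, b]² \ (-a, a)²`,
translated by `(1, 1)`, is crossed in its long direction. -/
def annulusCircuit (a b : ℤ) : Set (ℤ × ℤ → Bool) :=
  hCross (-b + 1) (b + 1) (a + 1) (b + 1) ∩ hCross (-b + 1) (b + 1) (-b + 1) (-a + 1) ∩
    (vCross (a + 1) (b + 1) (-b + 1) (b + 1) ∩ vCross (-b + 1) (-a + 1) (-b + 1) (b + 1))

theorem likelyIncreasing_annulusCircuit {c : ℝ} {a h : ℤ} (ha : ¬ 2 ∣ a) (hh : 2 ∣ h)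
    (ha₀ : 0 ≤ a) (hah : 2 * a ≤ h) (H : LikelyIncreasing c (hCross 0 (3 * h) 0 h)) :
    LikelyIncreasing (c * c * (c * c)) (annulusCircuit a (a + h)) := by
  have H' : LikelyIncreasing c (hCross 0 (2 * (a + h)) 0 h) :=
    H.mono (isLocalIncreasing_hCross _ _ _ _) (hCross_subset_of_le (by omega) (by omega))
  have htop : LikelyIncreasing c
      (hCross (-(a + h) + 1) (a + h + 1) (a + 1) (a + h + 1)) := by
    refine H'.hCross_congr ?_ ?_ ?_ ?_ <;> omega
  have hbottom : LikelyIncreasing c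
      (hCross (-(a + h) + 1) (a + h + 1) (-(a + h) + 1) (-a + 1)) := by
    refine H'.hCross_congr ?_ ?_ ?_ ?_ <;> omega
  exact (htop.inter hbottom).inter (htop.vCross_of_hCross.inter hbottom.vCross_of_hCross)

/-- The cells of the annulus `[-b, b]² \ (-a, a)²`. -/
noncomputable def annulus (a b : ℤ) : Finset (ℤ × ℤ) :=
  Finset.Icc (-b, -b) (b, b) \ Finset.Icc (1 - a, 1 - a) (a - 1, a - 1)

theorem mem_annulus {a b : ℤ} {c : ℤ × ℤ} : c ∈ annulus a b ↔
    ((-b ≤ c.1 ∧ c.1 ≤ b) ∧ -b ≤ c.2 ∧ c.2 ≤ b) ∧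
      (c.1 ≤ -a ∨ a ≤ c.1 ∨ c.2 ≤ -a ∨ a ≤ c.2) := by
  simp only [annulus, Finset.mem_sdiff, Finset.mem_Icc, Prod.le_def]
  omega

theorem dependsOn_dual_preimage_connEvent {R S : Set (ℤ × ℤ)}
    (hRS : MapsTo (fun c => (c.1 - 1, c.2 - 1)) R S) (U V : Set (ℤ × ℤ)) :
    DependsOn (· ∈ dual ⁻¹' connEvent R U V) S := by
  refine dependsOn_mem_of_imp fun ω ω' hω ⟨u, hu, v, hv, h⟩ =>
    ⟨u, hu, v, hv, h.mono fun c hc => ⟨?_, hc.2⟩⟩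
  rw [mem_openCells, dual, ← hω _ (hRS hc.2)]
  exact hc.1

theorem dependsOn_dual_preimage_annulusCircuit {a b : ℤ} (ha : 0 < a) :
    DependsOn (· ∈ dual ⁻¹' annulusCircuit a b) (annulus a b : Set (ℤ × ℤ)) := by
  have hrect {x₀ x₁ y₀ y₁ : ℤ} (h : ∀ c : ℤ × ℤ, x₀ ≤ c.1 + 1 ∧ c.1 + 1 ≤ x₁ ∧
      y₀ ≤ c.2 + 1 ∧ c.2 + 1 ≤ y₁ → c ∈ annulus a b) (U V : Set (ℤ × ℤ)) :
      DependsOn (· ∈ dual ⁻¹' connEvent (Icc (x₀, y₀) (x₁, y₁)) U V)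
        (annulus a b : Set (ℤ × ℤ)) :=
    dependsOn_dual_preimage_connEvent (fun c hc => h _ (by
      simpa only [sub_add_cancel] using mem_Icc_prod.1 hc)) U V
  refine dependsOn_mem_inter
    (dependsOn_mem_inter (hrect (fun c hc => ?_) _ _) (hrect (fun c hc => ?_) _ _))
    (dependsOn_mem_inter (hrect (fun c hc => ?_) _ _) (hrect (fun c hc => ?_) _ _))
  all_goals
    rw [mem_annulus]
    omega

theorem mem_Icc_of_annulusCircuit {a b : ℤ} (ha : 0 < a) (hab : a < b) {ω : ℤ × ℤ → Bool}
    (hω : dual ω ∈ annulusCircuit a b) {c : ℤ × ℤ} (hc : ConnIn 𝕃² (openCells ω) (0, 0) c) :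
    c ∈ Icc (-b, -b) (b, b) := by
  by_contra hcb
  obtain ⟨w, w', hw, hadj, -, hw'⟩ :=
    hc.exists_exit (T := Icc (-b, -b) (b, b)) (by simp only [mem_Icc_prod]; omega) hcb
  have hwb := mem_Icc_prod.1 hw.right_mem.2
  simp only [mem_Icc_prod] at hw'
  rw [squareLattice_adj] at hadj
  obtain ⟨⟨⟨l₁, hl₁, r₁, hr₁, h₁⟩, l₂, hl₂, r₂, hr₂, h₂⟩,
    ⟨l₃, hl₃, r₃, hr₃, h₃⟩, l₄, hl₄, r₄, hr₄, h₄⟩ := hω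
  simp only [mem_ofPred_eq] at hl₁ hr₁ hl₂ hr₂ hl₃ hr₃ hl₄ hr₄
  have hdisj {R R' : Set (ℤ × ℤ)} :
      ¬ ((openCells ω)ᶜ ∩ R ∩ (openCells ω ∩ R')).Nonempty := fun ⟨_, hc, hc'⟩ => hc.1 hc'.1
  obtain hside | hside | hside | hside : w.2 = b ∨ w.2 = -b ∨ w.1 = b ∨ w.1 = -b := by omega
  · refine hdisj (inter_nonempty_of_connIn_crossing ?_ ?_ h₁.of_dual hw) <;> intro c hc <;>
      have := mem_Icc_prod.1 hc.2 <;> omega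
  · refine hdisj (inter_nonempty_of_connIn_crossing ?_ ?_ h₂.of_dual hw.symm) <;> intro c hc <;>
      have := mem_Icc_prod.1 hc.2 <;> omega
  · refine hdisj (inter_comm _ _ ▸ inter_nonempty_of_connIn_crossing ?_ ?_ hw h₃.of_dual) <;>
      intro c hc <;> have := mem_Icc_prod.1 hc.2 <;> omega
  · refine hdisj (inter_comm _ _ ▸ inter_nonempty_of_connIn_crossing ?_ ?_ hw.symm h₄.of_dual) <;>
      intro c hc <;> have := mem_Icc_prod.1 hc.2 <;> omega

/-- The event that the cluster of the origin is infinite. -/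
def infiniteCluster : Set (ℤ × ℤ → Bool) :=
  {ω | {c | ConnIn 𝕃² (openCells ω) (0, 0) c}.Infinite}

theorem infiniteCluster_subset {a b : ℤ} (ha : 0 < a) (hab : a < b) :
    infiniteCluster ⊆ (dual ⁻¹' annulusCircuit a b)ᶜ := fun _ hω hcircuit =>
  hω ((finite_Icc (-b, -b) (b, b)).subset fun _ hc => mem_Icc_of_annulusCircuit ha hab hcircuit hc)

theorem exists_disjoint_annulus (S : Finset (ℤ × ℤ)) :
    ∃ N : ℕ, ∀ a b : ℤ, N < a → Disjoint S (annulus a b) := by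
  refine ⟨S.sup fun d => d.1.natAbs + d.2.natAbs, fun a b ha => ?_⟩
  rw [Finset.disjoint_left]
  intro d hd hd'
  have := Finset.le_sup (f := fun d : ℤ × ℤ => d.1.natAbs + d.2.natAbs) hd
  rw [mem_annulus] at hd'
  omega

theorem fair_infiniteCluster : fair (ℤ × ℤ) infiniteCluster = 0 := by
  obtain ⟨c, hc, hlong⟩ := exists_hCross_three_mul
  refine infinitePi_eq_zero_of_disjoint_supersets (fun _ => coin) (r := 1 - c * c * (c * c))
    (by linarith [show 0 < c * c * (c * c) by positivity]) fun S => ?_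
  obtain ⟨N, hN⟩ := exists_disjoint_annulus S
  obtain ⟨h, hM, hh, H⟩ := hlong (4 * N + 2)
  have hb : 2 * (N : ℤ) + 1 < 2 * N + 1 + h := by omega
  have hcircuit := likelyIncreasing_annulusCircuit (a := 2 * N + 1) (by omega) hh (by omega)
    (by omega) H
  refine ⟨annulus (2 * N + 1) (2 * N + 1 + h), (dual ⁻¹' annulusCircuit _ _)ᶜ, hN _ _ (by omega),
    dependsOn_mem_compl (dependsOn_dual_preimage_annulusCircuit (by omega)),
    infiniteCluster_subset (by omega) hb, ?_⟩
  change (fair (ℤ × ℤ)).real _ ≤ _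
  rw [probReal_compl_eq_one_sub (measurePreserving_dual.measurable hcircuit.measurableSet),
    measurePreserving_dual.measureReal_preimage hcircuit.measurableSet.nullMeasurableSet]
  linarith [hcircuit.le_measureReal]

/-! ### The law of the concrete Bernoulli product -/

/-- The uniform law on `[0, 1)`, the source of randomness of `bernoulliProduct`. -/
noncomputable def uniform : Measure ℝ := volume.restrict (Ico 0 1)

instance : IsProbabilityMeasure uniform := ⟨by simp [uniform]⟩

theorem measurable_decide {α : Type*} [MeasurableSpace α] {p : α → Prop} [DecidablePred p]
    (hp : MeasurableSet {x | p x}) : Measurable fun x => decide (p x) :=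
  measurable_to_bool (by simpa [preimage] using hp)

theorem eq_of_singleton_eq_of_bool {μ ν : Measure Bool} [IsProbabilityMeasure μ]
    [IsProbabilityMeasure ν] (b : Bool) (h : μ {b} = ν {b}) : μ = ν := by
  refine Measure.ext_of_singleton fun c => ?_
  rcases eq_or_ne c b with rfl | hc
  · exact h
  · rw [Bool.eq_not.2 hc, ← Bool.compl_singleton, prob_compl_eq_one_sub (by simp),
      prob_compl_eq_one_sub (by simp), h]

theorem measurable_binDigit (n : ℕ) : Measurable (binDigit n) :=
  measurable_decide <| (MeasurableSet.of_discrete (s := {m : ℤ | m % 2 = 1})).preimage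
    (Int.measurable_floor.comp (measurable_id.mul_const _))

theorem floor_mul_two_pow_succ (x : ℝ) (n : ℕ) :
    ⌊x * 2 ^ (n + 1)⌋ = 2 * ⌊x * 2 ^ n⌋ + if binDigit n x then 1 else 0 := by
  have hfloor := Int.floor_div_natCast (x * 2 ^ (n + 1)) 2
  rw [pow_succ, ← mul_assoc, Nat.cast_ofNat, mul_div_cancel_right₀ _ two_ne_zero, mul_assoc,
    ← pow_succ] at hfloor
  simp only [binDigit, decide_eq_true_eq]
  split_ifs <;> omega

theorem exists_binDigit_eq_iff_floor_eq (b : ℕ → Bool) (n : ℕ) :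
    ∃ m : ℤ, ∀ x, (x ∈ Ico (0 : ℝ) 1 ∧ ∀ i < n, binDigit i x = b i) ↔ ⌊x * 2 ^ n⌋ = m := by
  induction n with
  | zero => exact ⟨0, fun x => by simp [Int.floor_eq_iff]⟩
  | succ n ih =>
    obtain ⟨m, hm⟩ := ih
    refine ⟨2 * m + if b n then 1 else 0, fun x => ?_⟩
    rw [Nat.forall_lt_succ_right, ← and_assoc, hm, floor_mul_two_pow_succ]
    rcases binDigit n x <;> rcases b n <;> simp <;> omega

theorem uniform_binDigit_eq (b : ℕ → Bool) (n : ℕ) :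
    uniform {x | ∀ i < n, binDigit i x = b i} = 2⁻¹ ^ n := by
  obtain ⟨m, hm⟩ := exists_binDigit_eq_iff_floor_eq b n
  have hpow : (0 : ℝ) < 2 ^ n := by positivity
  have hdyadic : {x | ∀ i < n, binDigit i x = b i} ∩ Ico (0 : ℝ) 1 =
      Ico (m / 2 ^ n : ℝ) ((m + 1) / 2 ^ n) := by
    ext x
    rw [inter_comm, mem_Ico, div_le_iff₀ hpow, lt_div_iff₀ hpow, ← Int.floor_eq_iff, ← hm]
    rfl
  rw [uniform, Measure.restrict_apply' measurableSet_Ico, hdyadic, Real.volume_Ico, ← sub_div,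
    add_sub_cancel_left, one_div, ← inv_pow, ENNReal.ofReal_pow (by positivity),
    ENNReal.ofReal_inv_of_pos two_pos, ENNReal.ofReal_ofNat]

theorem measurePreserving_binDigit :
    MeasurePreserving (fun x n => binDigit n x) uniform (fair ℕ) := by
  have hmeas : Measurable fun x n => binDigit n x := measurable_pi_iff.2 measurable_binDigit
  refine ⟨hmeas, ?_⟩
  have := Measure.isProbabilityMeasure_map (μ := uniform) hmeas.aemeasurable
  refine ((isProjectiveLimit_nat_iff (isProjectiveMeasureFamily_pi fun _ => coin) _).2
    fun n => ?_).unique (Measure.isProjectiveLimit_infinitePi fun _ => coin)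
  refine Measure.ext_of_singleton fun σ => ?_
  have hpreimage : (fun x n => binDigit n x) ⁻¹' (Preorder.frestrictLe n ⁻¹' {σ}) =
      {x | ∀ i < n + 1, binDigit i x =
        if hi : i ≤ n then σ ⟨i, Finset.mem_Iic.2 hi⟩ else true} := by
    ext x
    simp only [mem_preimage, mem_singleton_iff, funext_iff, Subtype.forall, Finset.mem_Iic,
      Preorder.frestrictLe_apply, Nat.lt_succ_iff, mem_ofPred_eq]
    exact forall₂_congr fun i hi => by rw [dif_pos hi]
  rw [Measure.map_apply (by fun_prop) (measurableSet_singleton σ), Measure.map_apply hmeas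
    ((measurableSet_singleton σ).preimage (by fun_prop)), hpreimage, uniform_binDigit_eq,
    Measure.pi_singleton]
  simp [coin_singleton]

/-- The number in `[0, 1]` with binary expansion `b`. -/
noncomputable def binaryValue (b : ℕ → Bool) : ℝ :=
  Real.ofDigits fun n => if b n then (1 : Fin 2) else 0

theorem measurable_binaryValue : Measurable binaryValue :=
  (Real.continuous_ofDigits.comp <| continuous_pi fun n =>
    (continuous_of_discreteTopology (f := fun c : Bool => if c then (1 : Fin 2) else 0)).comp
      (continuous_apply n)).measurable

theorem binaryValue_binDigit {x : ℝ} (hx : x ∈ Ico (0 : ℝ) 1) :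
    binaryValue (fun n => binDigit n x) = x := by
  refine (congrArg Real.ofDigits (funext fun n => ?_)).trans (Real.ofDigits_digits one_lt_two hx)
  have hfloor := Int.natCast_floor_eq_floor (a := x * 2 ^ (n + 1)) (by have := hx.1; positivity)
  simp only [binDigit, Real.digits, ← hfloor, decide_eq_true_eq, Nat.cast_ofNat]
  ext
  split_ifs <;> simp <;> omega

theorem unifSample_eq_binaryValue (i : ℕ) (x : ℝ) :
    unifSample i x = binaryValue fun n => binDigit (Nat.pair i n) x := by
  simp only [unifSample, binaryValue, Real.ofDigits, Real.ofDigitsTerm]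
  exact tsum_congr fun n => by split_ifs <;> simp

section BernoulliProduct

open ProbabilityTheory unitInterval

theorem measurePreserving_binaryValue_lt (p : I) :
    MeasurePreserving (fun b => decide (binaryValue b < p)) (fair ℕ) Ber(true, false, p) := by
  have hmeas : Measurable fun b => decide (binaryValue b < p) :=
    measurable_decide (measurable_binaryValue measurableSet_Iio)
  have := Measure.isProbabilityMeasure_map (μ := fair ℕ) hmeas.aemeasurable
  have hpreimage : (fun x => decide (binaryValue (fun n => binDigit n x) < p)) ⁻¹' {true} ∩
      Ico (0 : ℝ) 1 = Ico (0 : ℝ) p := by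
    ext x
    refine ⟨fun ⟨hlt, hx⟩ => ?_, fun hx => ?_⟩
    · exact ⟨hx.1, by simpa [binaryValue_binDigit hx] using hlt⟩
    · have hx' : x ∈ Ico (0 : ℝ) 1 := ⟨hx.1, hx.2.trans_le p.2.2⟩
      exact ⟨by simpa [binaryValue_binDigit hx'] using hx.2, hx'⟩
  refine ⟨hmeas, eq_of_singleton_eq_of_bool true ?_⟩
  rw [← measurePreserving_binDigit.map_eq, Measure.map_map hmeas
    measurePreserving_binDigit.measurable, Measure.map_apply (hmeas.comp
    measurePreserving_binDigit.measurable) (measurableSet_singleton _), uniform,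
    Measure.restrict_apply' measurableSet_Ico, bernoulli_singleton_true]
  simp only [Function.comp_def, hpreimage, Real.volume_Ico, sub_zero]

theorem bernoulliProduct_eq_infinitePi {ι : Type*} [Encodable ι] (P : ι → I) :
    bernoulliProduct (fun i => (P i : ℝ)) =
      Measure.infinitePi fun i => Ber(true, false, P i) := by
  have hregroup := measurePreserving_comp_fair
    (f := fun q : ι × ℕ => Nat.pair (Encodable.encode q.1) q.2) fun q r h => by
      obtain ⟨h₁, h₂⟩ := Nat.pair_eq_pair.1 h
      exact Prod.ext (Encodable.encode_injective h₁) h₂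
  have hcurry : MeasurePreserving (MeasurableEquiv.curry ι ℕ Bool) (fair (ι × ℕ))
      (Measure.infinitePi fun _ : ι => fair ℕ) :=
    ⟨MeasurableEquiv.measurable _, Measure.infinitePi_map_curry fun _ _ => coin⟩
  have hthreshold : MeasurePreserving (fun b (i : ι) => decide (binaryValue (b i) < P i))
      (Measure.infinitePi fun _ => fair ℕ) (Measure.infinitePi fun i => Ber(true, false, P i)) := by
    have hmeas (i : ι) := (measurePreserving_binaryValue_lt (P i)).measurable
    refine ⟨measurable_pi_iff.2 fun i => (hmeas i).comp (measurable_pi_apply i), ?_⟩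
    rw [Measure.infinitePi_map_pi _ hmeas]
    simp only [(measurePreserving_binaryValue_lt _).map_eq]
  rw [← (hthreshold.comp (hcurry.comp (hregroup.comp measurePreserving_binDigit))).map_eq]
  simp only [bernoulliProduct, unifSample_eq_binaryValue]
  rfl

end BernoulliProduct

/-! ### Stars of the slab -/

/-- The sites of `ℤ²` of odd parity, which are the centres of the stars. Every bond of `ℤ²` has
exactly one odd endpoint. -/
abbrev OddSite : Type := {x : ℤ × ℤ // (x.1 + x.2) % 2 = 1}

/-- Labels of the bonds in a star of `S^k`: `(some d, z)` is the horizontal bond in direction `d` at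
height `z`, and `(none, z)` is the vertical bond above height `z`. The label `(none, k)` points at a
bond that leaves the slab; it is kept so that the labels form a product. -/
abbrev StarBond (k : ℕ) : Type := Option (Fin 4) × Fin (k + 1)

/-- The unit vectors of `ℤ²` in cyclic order, so that `d + 2` is opposite to `d`. -/
def dir : Fin 4 → ℤ × ℤ
  | 0 => (1, 0)
  | 1 => (0, 1)
  | 2 => (-1, 0)
  | 3 => (0, -1)

/-- The bond at height `z` that leaves the site `x` in direction `some d`, or upwards for `none`. -/
def bondAt (x : ℤ × ℤ) : Option (Fin 4) → ℤ → EdgeIdx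
  | none, z => ((x.1, x.2, z), 2)
  | some 0, z => ((x.1, x.2, z), 0)
  | some 1, z => ((x.1, x.2, z), 1)
  | some 2, z => ((x.1 - 1, x.2, z), 0)
  | some 3, z => ((x.1, x.2 - 1, z), 1)

/-- The bond of the slab with a given label in a given star. -/
def starBond (k : ℕ) (i : OddSite × StarBond k) : EdgeIdx :=
  bondAt i.1 i.2.1 (i.2.2 : ℕ)

/-- The cell of the doubled lattice that represents the bond of `ℤ²` in direction `d` at an odd
site. -/
def cell (i : OddSite × Fin 4) : ℤ × ℤ := (2 : ℤ) • i.1.1 + dir i.2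

/-- The projection of the slab to `ℤ²`. -/
def site (w : Vtx) : ℤ × ℤ := (w.1, w.2.1)

theorem dir_add_two (d : Fin 4) : dir (d + 2) = -dir d := by
  fin_cases d <;> rfl

theorem dir_parity (d : Fin 4) : ((dir d).1 + (dir d).2) % 2 = 1 := by
  fin_cases d <;> rfl

theorem bondAt_add_dir (x : ℤ × ℤ) (d : Fin 4) (z : ℤ) :
    bondAt (x + dir d) (some (d + 2)) z = bondAt x (some d) z := by
  fin_cases d <;> simp [bondAt, dir, sub_eq_add_neg]

theorem starBond_injective (k : ℕ) : Function.Injective (starBond k) := by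
  rintro ⟨⟨⟨u, v⟩, h⟩, o, z⟩ ⟨⟨⟨u', v'⟩, h'⟩, o', z'⟩ heq
  suffices u = u' ∧ v = v' ∧ (z : ℕ) = z' ∧ o = o' by simpa [Fin.ext_iff, and_assoc, and_comm]
  simp only [starBond] at heq h h'
  rcases o with _ | d <;> rcases o' with _ | d'
  · simpa [bondAt, and_assoc] using heq
  · fin_cases d' <;> simp [bondAt] at heq
  · fin_cases d <;> simp [bondAt] at heq
  · fin_cases d <;> fin_cases d' <;> simp [bondAt] at heq ⊢ <;> omega

theorem starBond_snd_eq_two_iff {k : ℕ} (i : OddSite × StarBond k) :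
    (starBond k i).2 = 2 ↔ i.2.1 = none := by
  obtain ⟨x, _ | d, z⟩ := i
  · simp [starBond, bondAt]
  · fin_cases d <;> simp [starBond, bondAt]

theorem cell_injective : Function.Injective cell := by
  rintro ⟨⟨⟨u, v⟩, h⟩, d⟩ ⟨⟨⟨u', v'⟩, h'⟩, d'⟩ heq
  suffices u = u' ∧ v = v' ∧ d = d' by simpa [and_assoc]
  simp only [cell] at heq h h'
  fin_cases d <;> fin_cases d' <;> simp [dir] at heq ⊢ <;> omega

theorem cell_parity (i : OddSite × Fin 4) : ¬ 2 ∣ (cell i).1 + (cell i).2 := by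
  have := dir_parity i.2
  simp only [cell, Prod.fst_add, Prod.snd_add, Prod.smul_fst, Prod.smul_snd, smul_eq_mul]
  omega

theorem exists_cell_eq {c : ℤ × ℤ} (hc : ¬ 2 ∣ c.1 + c.2) : ∃ i, cell i = c := by
  obtain ⟨a, b⟩ := c
  rcases Int.emod_two_eq a with ha | ha <;> by_cases hp : (a / 2 + b / 2) % 2 = 1
  · exact ⟨(⟨(a / 2, b / 2), hp⟩, 1), by simp [cell, dir]; omega⟩
  · exact ⟨(⟨(a / 2, b / 2 + 1), by simp only; omega⟩, 3), by simp [cell, dir]; omega⟩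
  · exact ⟨(⟨(a / 2, b / 2), hp⟩, 0), by simp [cell, dir]; omega⟩
  · exact ⟨(⟨(a / 2 + 1, b / 2), by simp only; omega⟩, 2), by simp [cell, dir]; omega⟩

section StarConnectivity

variable {k : ℕ}

/-- The states of the bonds of the star centred at `x`. -/
def starConfig (k : ℕ) (ω : Config) (x : OddSite) : StarBond k → Bool :=
  fun l => ω (starBond k (x, l))

/-- `z` and `z'` are joined by an open vertical bond in the central column of the star. -/
def ColumnAdj (η : StarBond k → Bool) (z z' : Fin (k + 1)) : Prop :=
  ((z' : ℕ) = z + 1 ∧ η (none, z) = true) ∨ ((z : ℕ) = z' + 1 ∧ η (none, z') = true)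

/-- Some open bond in direction `d` is connected to height `z` inside the central column. -/
def Reaches (η : StarBond k → Bool) (d : Fin 4) (z : Fin (k + 1)) : Prop :=
  ∃ z', η (some d, z') = true ∧ Relation.ReflTransGen (ColumnAdj η) z' z

/-- The star can be crossed by an open path entering along direction `d` and leaving along `d'`. -/
def StarConn (η : StarBond k → Bool) (d d' : Fin 4) : Prop :=
  ∃ z, Reaches η d z ∧ η (some d', z) = true

/-- `A` opens two arms of a planar star whenever the slab star `η` can be crossed from one to the
other. -/
def StarDominates (η : StarBond k → Bool) (A : Fin 4 → Bool) : Prop :=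
  ∀ d d', d ≠ d' → StarConn η d d' → A d = true ∧ A d' = true

end StarConnectivity

section Projection

variable {k : ℕ} {ω : Config} {A : ℤ × ℤ → Bool} {w w' : Vtx}

theorem OpenAdj.inSlab_right (h : OpenAdj k ω w w') : InSlab k w' := by
  obtain ⟨i, ⟨rfl, h, -⟩ | ⟨rfl, h, -⟩⟩ := h
  exacts [h.2, h.1]

theorem OpenAdj.inSlab_left (h : OpenAdj k ω w w') : InSlab k w := by
  obtain ⟨i, ⟨rfl, h, -⟩ | ⟨rfl, h, -⟩⟩ := h
  exacts [h.1, h.2]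

theorem InSlab.exists_fin (h : InSlab k w) : ∃ z : Fin (k + 1), ((z : ℕ) : ℤ) = w.2.2 :=
  ⟨⟨w.2.2.toNat, by have := h.2; omega⟩, Int.toNat_of_nonneg h.1⟩

theorem OpenAdj.vertical_or_horizontal (h : OpenAdj k ω w w') :
    (site w' = site w ∧ (w'.2.2 = w.2.2 + 1 ∧ ω (bondAt (site w) none w.2.2) = true ∨
      w.2.2 = w'.2.2 + 1 ∧ ω (bondAt (site w) none w'.2.2) = true)) ∨
    (w'.2.2 = w.2.2 ∧ ∃ d, site w' = site w + dir d ∧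
      ω (bondAt (site w) (some d) w.2.2) = true) := by
  obtain ⟨u, v, z⟩ := w
  obtain ⟨u', v', z'⟩ := w'
  obtain ⟨i, ⟨h, -, hω⟩ | ⟨h, -, hω⟩⟩ := h <;> fin_cases i <;>
    simp only [dvec, Prod.mk_add_mk, add_zero, Prod.mk.injEq] at h <;> obtain ⟨rfl, rfl, rfl⟩ := h
  · exact .inr ⟨rfl, 0, by simp [site, dir], hω⟩
  · exact .inr ⟨rfl, 1, by simp [site, dir], hω⟩
  · exact .inl ⟨rfl, .inl ⟨rfl, hω⟩⟩
  · exact .inr ⟨rfl, 2, by simp [site, dir], by simpa [site, bondAt] using hω⟩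
  · exact .inr ⟨rfl, 3, by simp [site, dir], by simpa [site, bondAt] using hω⟩
  · exact .inl ⟨rfl, .inr ⟨rfl, hω⟩⟩

theorem two_smul_mem_openCells (x : ℤ × ℤ) : (2 : ℤ) • x ∈ openCells A :=
  .inl ⟨by simp, by simp⟩

theorem connIn_through_centre {x : OddSite} {d d' : Fin 4} (h : A (cell (x, d)) = true)
    (h' : A (cell (x, d')) = true) :
    ConnIn 𝕃² (openCells A) ((2 : ℤ) • (x.1 + dir d)) ((2 : ℤ) • (x.1 + dir d')) := by
  have arm (d : Fin 4) (h : A (cell (x, d)) = true) :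
      ConnIn 𝕃² (openCells A) ((2 : ℤ) • x.1) ((2 : ℤ) • (x.1 + dir d)) := by
    refine ((ConnIn.refl (two_smul_mem_openCells _)).tail (b := (2 : ℤ) • x.1) (c := cell (x, d)) ?_
      (.inr ⟨cell_parity _, h⟩)).tail ?_ (two_smul_mem_openCells _) <;>
    fin_cases d <;> simp [squareLattice_adj, cell, dir] <;> omega
  exact (arm d h).symm.trans (arm d' h')

/-- The invariant of an open path of the slab from the origin: the path is followed, up to one step
at odd sites, by an open path of the planar configuration `A`. -/
structure Shadowed (k : ℕ) (ω : Config) (A : ℤ × ℤ → Bool) (w : Vtx) : Prop where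
  even : (w.1 + w.2.1) % 2 = 0 → ConnIn 𝕃² (openCells A) (0, 0) ((2 : ℤ) • site w)
  odd : ∀ (h : (w.1 + w.2.1) % 2 = 1) (z : Fin (k + 1)), ((z : ℕ) : ℤ) = w.2.2 →
    ∃ d, ConnIn 𝕃² (openCells A) (0, 0) ((2 : ℤ) • (site w + dir d)) ∧
      Reaches (starConfig k ω ⟨site w, h⟩) d z

theorem Shadowed.vertical (h : Shadowed k ω A w) (hslab : InSlab k w) (hsite : site w' = site w)
    (hω : w'.2.2 = w.2.2 + 1 ∧ ω (bondAt (site w) none w.2.2) = true ∨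
      w.2.2 = w'.2.2 + 1 ∧ ω (bondAt (site w) none w'.2.2) = true) : Shadowed k ω A w' := by
  obtain ⟨u, v, z⟩ := w
  obtain ⟨u', v', z'⟩ := w'
  obtain ⟨rfl, rfl⟩ : u' = u ∧ v' = v := by simpa [site] using hsite
  refine ⟨h.even, fun hodd y' hy' => ?_⟩
  obtain ⟨y, hy⟩ := hslab.exists_fin
  obtain ⟨d, hconn, z₀, hz₀, hpath⟩ := h.odd hodd y hy
  refine ⟨d, hconn, z₀, hz₀, hpath.tail ?_⟩
  dsimp only at hy hy' hω
  subst hy hy'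
  exact_mod_cast hω

theorem Shadowed.horizontal (h : Shadowed k ω A w) (hslab : InSlab k w)
    (hdom : ∀ x, StarDominates (starConfig k ω x) fun d => A (cell (x, d)))
    (hheight : w'.2.2 = w.2.2) {d : Fin 4} (hsite : site w' = site w + dir d)
    (hω : ω (bondAt (site w) (some d) w.2.2) = true) : Shadowed k ω A w' := by
  have hback : site w = site w' + dir (d + 2) := by rw [hsite, dir_add_two, add_neg_cancel_right]
  have hparity : (w'.1 + w'.2.1) % 2 = (w.1 + w.2.1 + 1) % 2 := by
    have := dir_parity d
    have h₁ : w'.1 = w.1 + (dir d).1 := congrArg Prod.fst hsite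
    have h₂ : w'.2.1 = w.2.1 + (dir d).2 := congrArg Prod.snd hsite
    omega
  constructor
  · intro heven
    have hodd : (w.1 + w.2.1) % 2 = 1 := by omega
    obtain ⟨z, hz⟩ := hslab.exists_fin
    obtain ⟨e, hconn, hreach⟩ := h.odd hodd z hz
    rw [hsite]
    obtain rfl | hed := eq_or_ne e d
    · exact hconn
    · rw [← hz] at hω
      obtain ⟨he, hd⟩ := hdom ⟨site w, hodd⟩ e d hed ⟨z, hreach, hω⟩
      exact hconn.trans (connIn_through_centre he hd)
  · intro hodd z hz
    refine ⟨d + 2, hback ▸ h.even (by omega), z, ?_, .refl⟩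
    simp only [starConfig, starBond]
    rwa [hsite, bondAt_add_dir, hz, hheight]

theorem shadowed_of_mem_cluster
    (hdom : ∀ x, StarDominates (starConfig k ω x) fun d => A (cell (x, d)))
    (hw : w ∈ cluster k ω 0) : InSlab k w ∧ Shadowed k ω A w := by
  induction (hw : Relation.ReflTransGen (OpenAdj k ω) 0 w) with
  | refl =>
    refine ⟨⟨le_rfl, by simp⟩, fun _ => ConnIn.refl (.inl ⟨by simp, by simp⟩), fun h => ?_⟩
    simp at h
  | tail _ hadj ih =>
    have hshadow := ih.2
    refine ⟨hadj.inSlab_right, ?_⟩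
    obtain ⟨hsite, hω⟩ | ⟨hheight, d, hsite, hω⟩ := hadj.vertical_or_horizontal
    · exact hshadow.vertical hadj.inSlab_left hsite hω
    · exact hshadow.horizontal hadj.inSlab_left hdom hheight hsite hω

theorem mem_infiniteCluster_of_starDominates
    (hdom : ∀ x, StarDominates (starConfig k ω x) fun d => A (cell (x, d)))
    (hinf : (cluster k ω 0).Infinite) : A ∈ infiniteCluster := by
  intro hfin
  let f : (ℤ × ℤ) × (ℤ × ℤ) × ℤ → Vtx := fun t => (t.1.1 / 2 - t.2.1.1, t.1.2 / 2 - t.2.1.2, t.2.2)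
  refine hinf ((hfin.prod (((finite_range dir).insert 0).prod (finite_Icc (0 : ℤ) k))).image f
    |>.subset fun w hw => ?_)
  obtain ⟨hslab, hshadow⟩ := shadowed_of_mem_cluster hdom hw
  rcases Int.emod_two_eq (w.1 + w.2.1) with heven | hodd
  · exact ⟨(_, 0, w.2.2), ⟨hshadow.even heven, mem_insert _ _, hslab⟩, by simp [f, site]⟩
  · obtain ⟨z, hz⟩ := hslab.exists_fin
    obtain ⟨d, hconn, -⟩ := hshadow.odd hodd z hz
    exact ⟨(_, dir d, w.2.2), ⟨hconn, mem_insert_of_mem _ ⟨d, rfl⟩, hslab⟩, by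
      simp [f, site, ← mul_add]⟩

end Projection

/-! ### Couplings obtained by rerouting mass -/

section Rerouting

variable {α β ι : Type*} [Fintype ι] [MeasurableSpace α] [MeasurableSpace β]

/-- The finitely supported measure that puts mass `c i` at the point `e i`. -/
noncomputable def weightedDirac (c : ι → ℝ) (e : ι → α) : Measure α :=
  ∑ i, ENNReal.ofReal (c i) • Measure.dirac (e i)

theorem weightedDirac_apply (c : ι → ℝ) (e : ι → α) {S : Set α} (hS : MeasurableSet S) :
    weightedDirac c e S = ∑ i, ENNReal.ofReal (c i) * S.indicator 1 (e i) := by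
  simp [weightedDirac, Measure.dirac_apply' _ hS]

instance (c : ι → ℝ) (e : ι → α) : IsFiniteMeasure (weightedDirac c e) := by
  refine ⟨?_⟩
  simp [weightedDirac_apply]

theorem weightedDirac_real_singleton [MeasurableSingletonClass α] [DecidableEq α] {c : ι → ℝ}
    (hc : ∀ i, 0 ≤ c i) (e : ι → α) (y : α) :
    (weightedDirac c e).real {y} = ∑ i with e i = y, c i := by
  rw [measureReal_def, weightedDirac_apply c e (measurableSet_singleton y), ENNReal.toReal_sum]
  · simp only [indicator_apply, mem_singleton_iff, Finset.sum_filter]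
    exact Finset.sum_congr rfl fun i _ => by split_ifs <;> simp [hc i]
  · intro i _
    simp only [indicator_apply]
    split_ifs <;> simp

theorem map_weightedDirac (c : ι → ℝ) (e : ι → α) {f : α → β} (hf : Measurable f) :
    (weightedDirac c e).map f = weightedDirac c (f ∘ e) := by
  ext S hS
  rw [Measure.map_apply hf hS, weightedDirac_apply _ _ (hf hS), weightedDirac_apply _ _ hS]
  rfl

theorem ae_weightedDirac_of_forall (c : ι → ℝ) (e : ι → α) {p : α → Prop}
    (hp : MeasurableSet {x | p x}) (h : ∀ i, p (e i)) : ∀ᵐ x ∂weightedDirac c e, p x := by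
  have hcompl : MeasurableSet {x | ¬ p x} := hp.compl
  rw [ae_iff, weightedDirac_apply _ _ hcompl]
  exact Finset.sum_eq_zero fun i _ => by simp [h i]

variable [Finite α] [Finite β] [MeasurableSingletonClass α] [MeasurableSingletonClass β]
  [DecidableEq α] [DecidableEq β] {μ : Measure α} {ν : Measure β} [IsProbabilityMeasure μ]
  [IsProbabilityMeasure ν]

/-- Starting from the coupling `(x, X x)` of `μ` with its image under `X`, the mass `w i` of the
point `s i` is sent to `r i` instead of `X (s i)`. -/
theorem exists_coupling_of_reroute (X : α → β) (s : ι → α) (r : ι → β) {w : ι → ℝ}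
    (hw : ∀ i, 0 ≤ w i) (hcapacity : ∀ x, ∑ i with s i = x, w i ≤ μ.real {x})
    (hbalance : ∀ y, (μ.map X).real {y} + ∑ i with r i = y, w i =
      ν.real {y} + ∑ i with X (s i) = y, w i) :
    ∃ κ : Measure (α × β), MeasurePreserving Prod.fst κ μ ∧ MeasurePreserving Prod.snd κ ν ∧
      ∀ᵐ z ∂κ, z.2 = X z.1 ∨ ∃ i, z = (s i, r i) := by
  have := Fintype.ofFinite α
  let c : α ⊕ ι → ℝ := Sum.elim (fun x => μ.real {x} - ∑ i with s i = x, w i) w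
  let e : α ⊕ ι → α × β := Sum.elim (fun x => (x, X x)) fun i => (s i, r i)
  have hc : ∀ j, 0 ≤ c j := Sum.rec (fun x => sub_nonneg.2 (hcapacity x)) hw
  refine ⟨weightedDirac c e, ⟨measurable_fst, ?_⟩, ⟨measurable_snd, ?_⟩,
    ae_weightedDirac_of_forall c e (toFinite _).measurableSet
      (Sum.rec (fun x => .inl rfl) fun i => .inr ⟨i, rfl⟩)⟩
  · rw [map_weightedDirac c e measurable_fst]
    refine Measure.ext_of_measureReal_singleton fun x => ?_
    rw [weightedDirac_real_singleton hc, Finset.sum_filter, Fintype.sum_sum_type]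
    simp [c, e, Finset.sum_filter]
  · rw [map_weightedDirac c e measurable_snd]
    refine Measure.ext_of_measureReal_singleton fun y => ?_
    have hmass : ∑ x with X x = y, μ.real {x} = (μ.map X).real {y} := by
      rw [sum_measureReal_singleton, map_measureReal_apply (measurable_of_finite X) (by simp)]
      congr 1
      ext x
      simp
    have hmoved : ∑ x with X x = y, ∑ i with s i = x, w i = ∑ i with X (s i) = y, w i := by
      rw [← Finset.sum_fiberwise_of_maps_to (g := s) (t := {x | X x = y}) (by simp)]
      refine Finset.sum_congr rfl fun x hx => ?_
      rw [Finset.filter_filter]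
      refine Finset.sum_congr (Finset.filter_congr fun i _ => ?_) fun _ _ => rfl
      exact ⟨fun h => ⟨h ▸ (Finset.mem_filter.1 hx).2, h⟩, And.right⟩
    rw [weightedDirac_real_singleton hc, Finset.sum_filter, Fintype.sum_sum_type]
    change (∑ x, if X x = y then μ.real {x} - ∑ i with s i = x, w i else 0) +
      (∑ i, if r i = y then w i else 0) = ν.real {y}
    rw [← Finset.sum_filter, ← Finset.sum_filter, Finset.sum_sub_distrib, hmass, hmoved]
    linarith [hbalance y]

end Rerouting

section Flow

open ProbabilityTheory unitInterval

theorem coin_real_singleton (b : Bool) : coin.real {b} = 1 / 2 := by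
  simp [measureReal_def, coin_singleton]

theorem bernoulli_real_singleton (P : I) (b : Bool) :
    (Ber(true, false, P)).real {b} = if b then (P : ℝ) else 1 - P := by
  cases b <;> simp [measureReal_def]

theorem bernoulli_real_singleton_eq_coin_add (P : I) (b : Bool) :
    (Ber(true, false, P)).real {b} = coin.real {b} + if b then (P : ℝ) - 1 / 2 else 1 / 2 - P := by
  rw [bernoulli_real_singleton, coin_real_singleton]
  split_ifs <;> ring

variable {ι : Type*} [Fintype ι] [LinearOrder ι]

/-- The mass moved from `update B a true` to `update B a false` in order to turn independent
coordinates of parameter `P` into fair ones. The coordinates are processed in decreasing order, so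
that those above `a` are already fair when `a` is. -/
noncomputable def rerouteMass (P : I) (B : ι → Bool) (a : ι) : ℝ :=
  (P - 1 / 2) * (∏ d with d < a, (Ber(true, false, P)).real {B d}) *
    ∏ d with a < d, coin.real {B d}

theorem rerouteMass_nonneg {P : I} (hP : 1 / 2 ≤ (P : ℝ)) (B : ι → Bool) (a : ι) :
    0 ≤ rerouteMass P B a :=
  mul_nonneg (mul_nonneg (sub_nonneg.2 hP) (Finset.prod_nonneg fun _ _ => measureReal_nonneg))
    (Finset.prod_nonneg fun _ _ => measureReal_nonneg)

theorem rerouteMass_le {P : I} (hP : 1 / 2 ≤ (P : ℝ)) (B : ι → Bool) (a : ι) :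
    rerouteMass P B a ≤ P - 1 / 2 := by
  have hle (ρ : Measure Bool) [IsProbabilityMeasure ρ] (s : Finset ι) :
      ∏ d ∈ s, ρ.real {B d} ≤ 1 :=
    Finset.prod_le_one (fun _ _ => measureReal_nonneg) fun _ _ => measureReal_le_one
  rw [rerouteMass, mul_assoc]
  exact mul_le_of_le_one_right (sub_nonneg.2 hP) (mul_le_one₀ (hle _ _)
    (Finset.prod_nonneg fun _ _ => measureReal_nonneg) (hle _ _))

theorem rerouteMass_update (P : I) (B : ι → Bool) (a : ι) (b : Bool) :
    rerouteMass P (Function.update B a b) a = rerouteMass P B a := by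
  unfold rerouteMass
  congr 1
  · congr 1
    refine Finset.prod_congr rfl fun d hd => ?_
    rw [Function.update_of_ne (Finset.mem_filter.1 hd).2.ne]
  · refine Finset.prod_congr rfl fun d hd => ?_
    rw [Function.update_of_ne (Finset.mem_filter.1 hd).2.ne']

theorem rerouteMass_balance (P : I) (A : ι → Bool) :
    (Measure.infinitePi fun _ : ι => Ber(true, false, P)).real {A} +
        ∑ a, (if A a then 0 else rerouteMass P A a) =
      (fair ι).real {A} + ∑ a, if A a then rerouteMass P A a else 0 := by
  have hreal (ρ : Measure Bool) [IsProbabilityMeasure ρ] :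
      (Measure.infinitePi fun _ : ι => ρ).real {A} = ∏ d, ρ.real {A d} := by
    simp only [measureReal_def, Measure.infinitePi_singleton_of_fintype, ENNReal.toReal_prod]
  have htelescope := Finset.prod_add_ordered Finset.univ (fun d => coin.real {A d})
    fun d => if A d then (P : ℝ) - 1 / 2 else 1 / 2 - P
  simp only [← bernoulli_real_singleton_eq_coin_add] at htelescope
  rw [fair, hreal, hreal, htelescope, add_assoc, ← Finset.sum_add_distrib]
  congr 1
  refine Finset.sum_congr rfl fun a _ => ?_
  rw [rerouteMass]
  split_ifs <;> ring

theorem rerouteMass_balance_update (P : I) (A : ι → Bool) :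
    (Measure.infinitePi fun _ : ι => Ber(true, false, P)).real {A} +
        ∑ i : ι × (ι → Bool) with Function.update i.2 i.1 false = A,
          (if i.2 i.1 then rerouteMass P i.2 i.1 else 0) =
      (fair ι).real {A} + ∑ i : ι × (ι → Bool) with i.2 = A,
        if i.2 i.1 then rerouteMass P i.2 i.1 else 0 := by
  simp only [Finset.sum_filter, Fintype.sum_prod_type]
  rw [Finset.sum_congr rfl fun a _ => Finset.sum_eq_single (Function.update A a true) ?_ (by simp)]
  · convert rerouteMass_balance P A using 3 with a
    · cases hA : A a
      · simp [rerouteMass_update, ← hA]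
      · simp [funext_iff, Function.update_apply, hA]
    · simp
  · intro B _ hB
    split_ifs with hupdate ha
    · exact absurd (by rw [← hupdate, Function.update_idem, ← ha, Function.update_eq_self]) hB
    · rfl
    · rfl

end Flow

/-! ### The law of a star -/

section StarLaw

open ProbabilityTheory unitInterval

theorem measurePreserving_decide_exists {ι : Type*} [Fintype ι]
    [DecidablePred fun b : ι → Bool => ∃ i, b i = true] (p : I) :
    MeasurePreserving (fun b : ι → Bool => decide (∃ i, b i = true))
      (Measure.infinitePi fun _ => Ber(true, false, p))
      Ber(true, false, σ (σ p ^ Fintype.card ι)) := by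
  have hmeas : Measurable fun b : ι → Bool => decide (∃ i, b i = true) := measurable_of_finite _
  have := Measure.isProbabilityMeasure_map
    (μ := Measure.infinitePi fun _ : ι => Ber(true, false, p)) hmeas.aemeasurable
  refine ⟨hmeas, eq_of_singleton_eq_of_bool false ?_⟩
  have hpreimage : (fun b : ι → Bool => decide (∃ i, b i = true)) ⁻¹' {false} =
      {fun _ => false} := by
    ext b
    simp [funext_iff]
  rw [Measure.map_apply hmeas (measurableSet_singleton _), hpreimage,
    Measure.infinitePi_singleton_of_fintype]
  simp only [bernoulli_singleton_false, Finset.prod_const, Finset.card_univ, coe_symm_eq,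
    sub_sub_cancel, Icc.coe_pow, ENNReal.ofReal_pow (sub_nonneg.2 p.2.2)]

/-- The law of the bonds of a star under `P_{p,q}`. -/
noncomputable def starLaw (k : ℕ) (p q : I) : Measure (StarBond k → Bool) :=
  Measure.infinitePi fun l => Ber(true, false, if l.1 = none then q else p)

instance (k : ℕ) (p q : I) : IsProbabilityMeasure (starLaw k p q) := by
  unfold starLaw
  infer_instance

/-- The probability that at least one of `k + 1` parallel horizontal bonds is open. -/
def columnProb (k : ℕ) (p : I) : I := σ (σ p ^ (k + 1))

theorem coe_columnProb (k : ℕ) (p : I) : (columnProb k p : ℝ) = 1 - (1 - p) ^ (k + 1) := by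
  simp [columnProb]

variable {k : ℕ}

/-- The directions in which a star has an open bond at some height. -/
def openArms (η : StarBond k → Bool) (d : Fin 4) : Bool := decide (∃ z, η (some d, z) = true)

theorem measurePreserving_openArms (p q : I) :
    MeasurePreserving openArms (starLaw k p q)
      (Measure.infinitePi fun _ => Ber(true, false, columnProb k p)) := by
  have hrestrict : MeasurePreserving
      (fun (η : StarBond k → Bool) (i : Fin 4 × Fin (k + 1)) => η (some i.1, i.2))
      (starLaw k p q) (Measure.infinitePi fun _ => Ber(true, false, p)) := by
    refine ⟨by fun_prop, ?_⟩
    rw [starLaw, Measure.map_infinitePi_infinitePi_of_inj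
      (f := fun i : Fin 4 × Fin (k + 1) => (some i.1, i.2)) fun i j h => by
        simpa [Prod.ext_iff] using h]
    simp
  have hcurry : MeasurePreserving (MeasurableEquiv.curry (Fin 4) (Fin (k + 1)) Bool)
      (Measure.infinitePi fun _ => Ber(true, false, p))
      (Measure.infinitePi fun _ => Measure.infinitePi fun _ => Ber(true, false, p)) :=
    ⟨MeasurableEquiv.measurable _, Measure.infinitePi_map_curry fun _ _ => Ber(true, false, p)⟩
  have hcolumn := measurePreserving_decide_exists (ι := Fin (k + 1)) p
  rw [Fintype.card_fin] at hcolumn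
  have hcolumns : MeasurePreserving (fun b (d : Fin 4) => decide (∃ z, b d z = true))
      (Measure.infinitePi fun _ => Measure.infinitePi fun _ : Fin (k + 1) => Ber(true, false, p))
      (Measure.infinitePi fun _ => Ber(true, false, columnProb k p)) := by
    refine ⟨measurable_of_finite _, ?_⟩
    rw [Measure.infinitePi_map_pi _ (f := fun (_ : Fin 4) (b : Fin (k + 1) → Bool) =>
      decide (∃ z, b z = true)) fun _ => hcolumn.measurable]
    simp only [hcolumn.map_eq, columnProb]
  exact hcolumns.comp (hcurry.comp hrestrict)

theorem starDominates_openArms (η : StarBond k → Bool) : StarDominates η (openArms η) := by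
  rintro d d' - ⟨z, ⟨z', hz', -⟩, hz⟩
  exact ⟨decide_eq_true ⟨z', hz'⟩, decide_eq_true ⟨z, hz⟩⟩

/-- The star whose open bonds are those of the arms in `B`, at height `0` for the arm `a` and at
height `1` for the others: the arm `a` is disconnected from the others. -/
def splitStar (B : Fin 4 → Bool) (a : Fin 4) : StarBond k → Bool
  | (none, _) => false
  | (some d, z) => B d && decide ((z : ℕ) = if d = a then 0 else 1)

theorem openArms_splitStar (hk : 1 ≤ k) (B : Fin 4 → Bool) (a : Fin 4) :
    openArms (splitStar (k := k) B a) = B := by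
  funext d
  have hheight : (if d = a then 0 else 1) < k + 1 := by split_ifs <;> omega
  rw [Bool.eq_iff_iff]
  simp only [openArms, splitStar, decide_eq_true_eq, Bool.and_eq_true]
  exact ⟨fun ⟨_, h, _⟩ => h, fun h => ⟨⟨_, hheight⟩, h, rfl⟩⟩

theorem starDominates_splitStar (B : Fin 4 → Bool) (a : Fin 4) :
    StarDominates (splitStar (k := k) B a) (Function.update B a false) := by
  rintro d d' hne ⟨z, ⟨z', hz', hpath⟩, hz⟩
  obtain rfl : z = z' := by
    cases hpath with
    | refl => rfl
    | tail _ hadj => simp [ColumnAdj, splitStar] at hadj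
  simp only [splitStar, Bool.and_eq_true, decide_eq_true_eq] at hz hz'
  have hheight : (if d = a then 0 else 1) = if d' = a then 0 else 1 := hz'.2.symm.trans hz.2
  have hd : d ≠ a := by rintro rfl; simp [hne.symm] at hheight
  have hd' : d' ≠ a := by rintro rfl; simp [hne] at hheight
  simp [hd, hd', hz.1, hz'.1]

/-- A coupling of a star of the slab with four fair coins that dominate its connections. -/
structure IsStarCoupling (k : ℕ) (p q : I) (κ : Measure ((StarBond k → Bool) × (Fin 4 → Bool))) :
    Prop where
  fst : MeasurePreserving Prod.fst κ (starLaw k p q)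
  snd : MeasurePreserving Prod.snd κ (fair (Fin 4))
  dominates : ∀ᵐ x ∂κ, StarDominates x.1 x.2

theorem exists_isStarCoupling_of_columnProb_eq {p : I} (hp : (columnProb k p : ℝ) = 1 / 2) (q : I) :
    ∃ κ, IsStarCoupling k p q κ := by
  have hmeas : Measurable fun η : StarBond k → Bool => (η, openArms η) := measurable_of_finite _
  have hhalf : columnProb k p = ⟨1 / 2, by norm_num, by norm_num⟩ := Subtype.ext hp
  have harms := measurePreserving_openArms (k := k) p q
  rw [hhalf] at harms
  refine ⟨(starLaw k p q).map fun η => (η, openArms η), ⟨measurable_fst, ?_⟩,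
    ⟨measurable_snd, ?_⟩, ?_⟩
  · rw [Measure.map_map measurable_fst hmeas]
    exact Measure.map_id
  · rw [Measure.map_map measurable_snd hmeas]
    exact harms.map_eq
  · rw [ae_map_iff hmeas.aemeasurable (toFinite _).measurableSet]
    exact ae_of_all _ starDominates_openArms

/-- The slack comes from the stars in which an arm is disconnected from the others: its mass can be
sent to a planar star in which this arm is closed. -/
theorem exists_isStarCoupling_of_splitStar (hk : 1 ≤ k) {p q : I}
    (hp : 1 / 2 ≤ (columnProb k p : ℝ))
    (hslack : ∀ B a, 64 * ((columnProb k p : ℝ) - 1 / 2) ≤ (starLaw k p q).real {splitStar B a}) :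
    ∃ κ, IsStarCoupling k p q κ := by
  let w : Fin 4 × (Fin 4 → Bool) → ℝ := fun i =>
    if i.2 i.1 then rerouteMass (columnProb k p) i.2 i.1 else 0
  have hw (i) : 0 ≤ w i := by
    dsimp only [w]
    split_ifs
    exacts [rerouteMass_nonneg hp _ _, le_rfl]
  have hw_le (i) : w i ≤ columnProb k p - 1 / 2 := by
    dsimp only [w]
    split_ifs
    exacts [rerouteMass_le hp _ _, sub_nonneg.2 hp]
  have hcapacity (η) : ∑ i with splitStar i.2 i.1 = η, w i ≤ (starLaw k p q).real {η} := by
    by_cases hη : ∃ B a, splitStar B a = η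
    · obtain ⟨B, a, rfl⟩ := hη
      refine le_trans ?_ (hslack B a)
      calc ∑ i with splitStar i.2 i.1 = splitStar B a, w i
          ≤ ∑ i, w i := Finset.sum_le_univ_sum_of_nonneg hw
        _ ≤ _ := Finset.sum_le_card_nsmul _ _ _ fun i _ => hw_le i
        _ = _ := by simp
    · rw [Finset.filter_false_of_mem fun i _ hi => hη ⟨_, _, hi⟩]
      exact measureReal_nonneg
  have hbalance (A) : ((starLaw k p q).map openArms).real {A} +
      ∑ i with Function.update i.2 i.1 false = A, w i = (fair (Fin 4)).real {A} +
      ∑ i with openArms (splitStar (k := k) i.2 i.1) = A, w i := by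
    simp only [(measurePreserving_openArms p q).map_eq, openArms_splitStar hk]
    exact rerouteMass_balance_update _ A
  obtain ⟨κ, hfst, hsnd, hκ⟩ := exists_coupling_of_reroute openArms
    (fun i : Fin 4 × (Fin 4 → Bool) => splitStar i.2 i.1) _ hw hcapacity hbalance
  refine ⟨κ, hfst, hsnd, hκ.mono ?_⟩
  rintro ⟨η, A⟩ (h | ⟨i, h⟩)
  · obtain rfl : A = openArms η := h
    exact starDominates_openArms η
  · obtain ⟨rfl, rfl⟩ := Prod.mk.inj h
    exact starDominates_splitStar _ _

end StarLaw

/-! ### Infinite clusters in product spaces -/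

theorem measurableSet_reflTransGen {Ω V : Type*} [MeasurableSpace Ω] [Countable V]
    {R : Ω → V → V → Prop} (hR : ∀ x y, MeasurableSet {ω | R ω x y}) (x y : V) :
    MeasurableSet {ω | Relation.ReflTransGen (R ω) x y} := by
  have hchain (l : List V) (x : V) : MeasurableSet {ω | (x :: l).IsChain (R ω)} := by
    induction l generalizing x with
    | nil => simp
    | cons y l ih =>
      simp only [List.isChain_cons_cons]
      exact (hR x y).inter (ih y)
  have heq : {ω | Relation.ReflTransGen (R ω) x y} =
      ⋃ l : {l : List V // (x :: l).getLast (List.cons_ne_nil _ _) = y},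
        {ω | (x :: l.1).IsChain (R ω)} := by
    ext ω
    simp only [mem_iUnion, mem_ofPred_eq]
    constructor
    · intro h
      obtain ⟨l, hl, hlast⟩ := List.exists_isChain_cons_of_relationReflTransGen h
      exact ⟨⟨l, hlast⟩, hl⟩
    · rintro ⟨⟨l, hlast⟩, hl⟩
      exact List.relationReflTransGen_of_exists_isChain_cons l hl hlast
  rw [heq]
  exact MeasurableSet.iUnion fun l => hchain l x

theorem measurableSet_infinite_reflTransGen {Ω V : Type*} [MeasurableSpace Ω] [Countable V]
    {R : Ω → V → V → Prop} (hR : ∀ x y, MeasurableSet {ω | R ω x y}) (x : V) :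
    MeasurableSet {ω | {y | Relation.ReflTransGen (R ω) x y}.Infinite} := by
  have hmeas : Measurable fun ω => {y | Relation.ReflTransGen (R ω) x y} :=
    measurable_set_iff.2 fun y => measurableSet_setOfPred.1 (measurableSet_reflTransGen hR x y)
  simp only [← encard_eq_top_iff]
  exact (measurable_encard.comp hmeas) (measurableSet_singleton ⊤)

theorem measurableSet_coord_eq_true {ι : Type*} (i : ι) :
    MeasurableSet {ω : ι → Bool | ω i = true} :=
  measurableSet_eq_fun (measurable_pi_apply i) measurable_const

theorem measurableSet_infinite_cluster (k : ℕ) (x : Vtx) :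
    MeasurableSet {ω | (cluster k ω x).Infinite} := by
  refine measurableSet_infinite_reflTransGen (fun y z => ?_) x
  simp only [OpenAdj, ofPred_exists]
  have hopen (e : EdgeIdx) (P Q : Prop) : MeasurableSet {ω : Config | P ∧ Q ∧ ω e = true} :=
    (MeasurableSet.const P).inter ((MeasurableSet.const Q).inter (measurableSet_coord_eq_true e))
  exact .iUnion fun i => (hopen (y, i) _ _).union (hopen (z, i) _ _)

theorem measurableSet_infiniteCluster : MeasurableSet infiniteCluster := by
  have h0 (ω : ℤ × ℤ → Bool) : ((0, 0) : ℤ × ℤ) ∈ openCells ω := .inl ⟨by simp, by simp⟩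
  simp only [infiniteCluster, ConnIn, h0, true_and]
  refine measurableSet_infinite_reflTransGen (fun c d => (MeasurableSet.const _).inter ?_) _
  exact (MeasurableSet.const _).union
    ((MeasurableSet.const _).inter (measurableSet_coord_eq_true d))

theorem measurable_extend_const {α β γ : Type*} [MeasurableSpace γ] {f : α → β}
    (hf : Function.Injective f) (c : γ) :
    Measurable fun ξ : α → γ => Function.extend f ξ fun _ => c := by
  refine measurable_pi_iff.2 fun b => ?_
  by_cases h : ∃ a, f a = b
  · obtain ⟨a, rfl⟩ := h
    simpa only [hf.extend_apply] using measurable_pi_apply a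
  · simpa only [Function.extend_apply' _ _ _ h] using measurable_const

theorem le_extend_top {α β γ : Type*} [Preorder γ] [OrderTop γ] {f : α → β}
    (hf : Function.Injective f) (ξ : β → γ) :
    ξ ≤ Function.extend f (fun a => ξ (f a)) fun _ => ⊤ := by
  intro b
  by_cases h : ∃ a, f a = b
  · obtain ⟨a, rfl⟩ := h
    rw [hf.extend_apply]
  · rw [Function.extend_apply' _ _ _ h]
    exact le_top

theorem ae_forall_infinitePi {J X : Type*} [Countable J] [MeasurableSpace X] {μ : Measure X}
    [IsProbabilityMeasure μ] {P : X → Prop} (h : ∀ᵐ x ∂μ, P x) :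
    ∀ᵐ x ∂Measure.infinitePi fun _ : J => μ, ∀ j, P (x j) :=
  ae_all_iff.2 fun j =>
    (measurePreserving_eval_infinitePi (fun _ : J => μ) j).quasiMeasurePreserving.ae h

theorem measurePreserving_uncurry {J L X Y : Type*} [MeasurableSpace X] [MeasurableSpace Y]
    {κ : Measure X} [IsProbabilityMeasure κ] {μ : L → Measure Y} [∀ l, IsProbabilityMeasure (μ l)]
    {φ : X → L → Y} (hφ : MeasurePreserving φ κ (Measure.infinitePi μ)) :
    MeasurePreserving (fun (x : J → X) (i : J × L) => φ (x i.1) i.2)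
      (Measure.infinitePi fun _ => κ) (Measure.infinitePi fun i => μ i.2) := by
  have hpi : MeasurePreserving (fun (x : J → X) j => φ (x j)) (Measure.infinitePi fun _ => κ)
      (Measure.infinitePi fun _ => Measure.infinitePi μ) := by
    refine ⟨measurable_pi_iff.2 fun j => hφ.measurable.comp (measurable_pi_apply j), ?_⟩
    rw [Measure.infinitePi_map_pi _ fun _ => hφ.measurable]
    simp only [hφ.map_eq]
  have hcurry : MeasurePreserving (MeasurableEquiv.curry J L Y).symm
      (Measure.infinitePi fun _ => Measure.infinitePi μ) (Measure.infinitePi fun i => μ i.2) :=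
    ⟨MeasurableEquiv.measurable _, Measure.infinitePi_map_curry_symm fun _ => μ⟩
  exact hcurry.comp hpi

/-! ### Absence of percolation in the slab -/

section Slab

open ProbabilityTheory unitInterval

theorem openCells_extend_cell (ω : ℤ × ℤ → Bool) (b : ℤ × ℤ → Bool) :
    openCells (Function.extend cell (fun i => ω (cell i)) b) = openCells ω := by
  ext c
  refine or_congr_right (and_congr_right fun hc => ?_)
  obtain ⟨i, rfl⟩ := exists_cell_eq hc
  rw [cell_injective.extend_apply]

theorem ae_extend_cell_notMem_infiniteCluster :
    ∀ᵐ A ∂fair (OddSite × Fin 4), Function.extend cell A (fun _ => false) ∉ infiniteCluster := by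
  have hmeas := measurable_extend_const cell_injective false measurableSet_infiniteCluster
  refine measure_eq_zero_iff_ae_notMem.1
    ((measurePreserving_comp_fair cell_injective).measure_preimage hmeas.nullMeasurableSet ▸ ?_)
  simpa only [preimage, infiniteCluster, mem_ofPred_eq, openCells_extend_cell]
    using fair_infiniteCluster

theorem measurePreserving_comp_starBond (k : ℕ) (p q : I) :
    MeasurePreserving (fun (ω : Config) i => ω (starBond k i)) (slabMeasure k p q)
      (Measure.infinitePi fun i : OddSite × StarBond k =>
        Ber(true, false, if i.2.1 = none then q else p)) := by
  have hslab : slabMeasure k p q =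
      Measure.infinitePi fun e => Ber(true, false, if e.2 = 2 then q else p) := by
    simp only [← bernoulliProduct_eq_infinitePi, slabMeasure, apply_ite Subtype.val]
  refine ⟨by fun_prop, ?_⟩
  rw [hslab, Measure.map_infinitePi_infinitePi_of_inj (starBond_injective k)]
  simp only [starBond_snd_eq_two_iff]

theorem cluster_mono {k : ℕ} {ω ω' : Config} (h : ω ≤ ω') (x : Vtx) :
    cluster k ω x ⊆ cluster k ω' x := fun y hy =>
  Relation.ReflTransGen.mono (fun _ _ ⟨i, hi⟩ =>
    ⟨i, hi.imp (.imp_right (.imp_right (h _))) (.imp_right (.imp_right (h _)))⟩) x y hy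

theorem theta_eq_zero_of_isStarCoupling {k : ℕ} {p q : I}
    {κ : Measure ((StarBond k → Bool) × (Fin 4 → Bool))} (hκ : IsStarCoupling k p q κ) :
    theta k p q = 0 := by
  have hprob : IsProbabilityMeasure κ :=
    have : IsProbabilityMeasure (κ.map Prod.fst) := by rw [hκ.fst.map_eq]; infer_instance
    Measure.isProbabilityMeasure_of_map Prod.fst
  have hinj := starBond_injective k
  have hstars := measurePreserving_uncurry (J := OddSite) hκ.fst
  have hcells := measurePreserving_uncurry (J := OddSite) hκ.snd
  have hmeas := measurable_extend_const hinj true (measurableSet_infinite_cluster k 0)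
  have hnull : Measure.infinitePi (fun _ => κ)
      {x | (cluster k (Function.extend (starBond k) (fun i => (x i.1).1 i.2) fun _ => true)
        0).Infinite} = 0 := by
    refine measure_eq_zero_iff_ae_notMem.2 ?_
    filter_upwards [ae_forall_infinitePi hκ.dominates,
      hcells.quasiMeasurePreserving.ae ae_extend_cell_notMem_infiniteCluster] with x hdom hfin hinf
    refine hfin (mem_infiniteCluster_of_starDominates (fun j => ?_) hinf)
    simpa +unfoldPartialApp only [starConfig, hinj.extend_apply, cell_injective.extend_apply]
      using hdom j
  replace hnull := (hstars.measure_preimage hmeas.nullMeasurableSet).symm.trans hnull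
  rw [← (measurePreserving_comp_starBond k p q).measure_preimage hmeas.nullMeasurableSet] at hnull
  exact measure_mono_null (fun ω hω => hω.mono (cluster_mono (le_extend_top hinj ω) 0)) hnull

end Slab

section CriticalCurve

open ProbabilityTheory unitInterval Filter Topology

variable {k : ℕ}

theorem pow_le_starLaw_real_splitStar {p q : I} {δ : ℝ} (hδ : 0 ≤ δ) (hp : δ ≤ p)
    (hp' : δ ≤ 1 - p) (hq : δ ≤ 1 - q) (B : Fin 4 → Bool) (a : Fin 4) :
    δ ^ Fintype.card (StarBond k) ≤ (starLaw k p q).real {splitStar B a} := by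
  rw [starLaw, measureReal_def, Measure.infinitePi_singleton_of_fintype, ENNReal.toReal_prod,
    ← Finset.card_univ, ← Finset.prod_const]
  refine Finset.prod_le_prod (fun _ _ => hδ) fun l _ => ?_
  obtain ⟨_ | d, z⟩ := l
  · simpa [splitStar, ← measureReal_def] using hq
  · cases h : splitStar B a (some d, z) <;> simpa [h, ← measureReal_def]

theorem theta_eq_zero_of_pow_eq {p q : ℝ} (hp : p ∈ I) (hq : q ∈ I)
    (hcol : (1 - p) ^ (k + 1) = 1 / 2) : theta k p q = 0 := by
  lift p to I using hp
  lift q to I using hq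
  obtain ⟨κ, hκ⟩ := exists_isStarCoupling_of_columnProb_eq
    (by rw [coe_columnProb, hcol]; norm_num : (columnProb k p : ℝ) = 1 / 2) q
  exact theta_eq_zero_of_isStarCoupling hκ

theorem theta_eq_zero_of_slack (hk : 1 ≤ k) {p q δ : ℝ} (hδ : 0 ≤ δ) (hp : δ ≤ p)
    (hp' : δ ≤ 1 - p) (hq₀ : 0 ≤ q) (hq : δ ≤ 1 - q) (hcol : (1 - p) ^ (k + 1) ≤ 1 / 2)
    (hslack : 64 * (1 / 2 - (1 - p) ^ (k + 1)) ≤ δ ^ Fintype.card (StarBond k)) :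
    theta k p q = 0 := by
  lift p to I using ⟨hδ.trans hp, by linarith⟩
  lift q to I using ⟨hq₀, by linarith⟩
  obtain ⟨κ, hκ⟩ := exists_isStarCoupling_of_splitStar hk (p := p) (q := q)
    (by rw [coe_columnProb]; linarith) fun B a => by
      refine le_trans ?_ (pow_le_starLaw_real_splitStar hδ hp hp' hq B a)
      rw [coe_columnProb]
      linarith
  exact theta_eq_zero_of_isStarCoupling hκ

theorem one_sub_pCrit_pow (k : ℕ) : (1 - pCrit k) ^ (k + 1) = 1 / 2 := by
  rw [pCrit, sub_sub_cancel, one_div (_ + 1), ← Nat.cast_add_one,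
    Real.rpow_inv_natCast_pow (by norm_num) k.succ_ne_zero]

theorem pCrit_pos (k : ℕ) : 0 < pCrit k :=
  sub_pos.2 (Real.rpow_lt_one (by norm_num) (by norm_num) (by positivity))

theorem pCrit_le_half (k : ℕ) : pCrit k ≤ 1 / 2 := by
  have hnonneg : 0 ≤ 1 - pCrit k := by
    rw [pCrit, sub_sub_cancel]
    positivity
  have := pow_le_of_le_one hnonneg (by linarith [pCrit_pos k]) k.succ_ne_zero
  rw [Nat.succ_eq_add_one, one_sub_pCrit_pow] at this
  linarith

theorem qc_le_one (k : ℕ) (p : ℝ) : qc k p ≤ 1 :=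
  Real.sSup_le (fun _ hq => hq.1.2) zero_le_one

theorem le_qc {p q : ℝ} (hq : q ∈ I) (h : theta k p q = 0) : q ≤ qc k p :=
  le_csSup ⟨1, fun _ hr => hr.1.2⟩ ⟨hq, h⟩

theorem eventually_theta_eq_zero (hk : 1 ≤ k) {q : ℝ} (hq₀ : 0 ≤ q) (hq₁ : q < 1) :
    ∀ᶠ p in 𝓝[>] pCrit k, theta k p q = 0 := by
  have hpos := pCrit_pos k
  have hhalf := pCrit_le_half k
  obtain ⟨δ, hδ, hδmin⟩ := exists_between (lt_min hpos (sub_pos.2 hq₁))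
  obtain ⟨hδp, hδq⟩ := lt_min_iff.1 hδmin
  have hcont : Continuous fun p : ℝ => 64 * (1 / 2 - (1 - p) ^ (k + 1)) := by fun_prop
  have hslack : ∀ᶠ p in 𝓝 (pCrit k),
      64 * (1 / 2 - (1 - p) ^ (k + 1)) < δ ^ Fintype.card (StarBond k) := by
    refine hcont.continuousAt.eventually_lt continuousAt_const ?_
    simpa [one_sub_pCrit_pow] using pow_pos hδ _
  have hbound : ∀ᶠ p in 𝓝 (pCrit k), p < 1 - δ := eventually_lt_nhds (by linarith)
  filter_upwards [self_mem_nhdsWithin, nhdsWithin_le_nhds hslack, nhdsWithin_le_nhds hbound]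
    with p (hp : pCrit k < p) hlt hp₁
  refine theta_eq_zero_of_slack hk hδ.le (by linarith) (by linarith) hq₀ hδq.le ?_ hlt.le
  rw [← one_sub_pCrit_pow k]
  exact pow_le_pow_left₀ (by linarith) (by linarith) _

theorem tendsto_qc_nhdsGT_pCrit (hk : 1 ≤ k) : Tendsto (qc k) (𝓝[>] pCrit k) (𝓝 1) := by
  refine tendsto_order.2
    ⟨fun b hb => ?_, fun b hb => .of_forall fun p => (qc_le_one k p).trans_lt hb⟩
  obtain ⟨q, hq, hq₁⟩ := exists_between (max_lt hb zero_lt_one)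
  obtain ⟨hbq, hq₀⟩ := max_lt_iff.1 hq
  filter_upwards [eventually_theta_eq_zero hk hq₀.le hq₁] with p hp
  exact hbq.trans_le (le_qc ⟨hq₀.le, hq₁.le⟩ hp)

theorem qc_pCrit (k : ℕ) : qc k (pCrit k) = 1 :=
  (qc_le_one k _).antisymm <| le_qc ⟨zero_le_one, le_rfl⟩ <|
    theta_eq_zero_of_pow_eq ⟨(pCrit_pos k).le, by linarith [pCrit_le_half k]⟩
      ⟨zero_le_one, le_rfl⟩ (one_sub_pCrit_pow k)

end CriticalCurve

/-- `q_c(p_k) = 1` and `q_c(p) → 1` as `p ↓ p_k`. -/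
theorem qc_at_pCrit (k : ℕ) :
    qc k (pCrit k) = 1 ∧
    Filter.Tendsto (qc k) (nhdsWithin (pCrit k) (Set.Ioc (pCrit k) (1 / 2))) (nhds 1) := by
  refine ⟨qc_pCrit k, ?_⟩
  obtain rfl | hk := Nat.eq_zero_or_pos k
  · have hpCrit : pCrit 0 = 1 / 2 := by norm_num [pCrit]
    simp [hpCrit]
  · exact (tendsto_qc_nhdsGT_pCrit hk).mono_left (nhdsWithin_mono _ Ioc_subset_Ioi_self)

end AnisoSlab
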